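/- Let λ be a d-invariant rational lamination. Every infinite λ-unlinked class L is eventually periodic under m_d: there exist n > 0 and ℓ ≥ 0 with m_d^{n+ℓ}(L) = m_d^{ℓ}(L). -/

import Mathlib

noncomputable section
open Set Function

/-- The circle `ℝ/ℤ`. -/
abbrev Circle1 := AddCircle (1 : ℝ)

/-- Multiplication by `d` on the circle. -/
def md (d : ℕ) (x : Circle1) : Circle1 := d • x

/-- The rational angles `ℚ/ℤ ⊆ ℝ/ℤ`. -/
def ratC : Set Circle1 := {x | ∃ q : ℚ, x = ((q : ℝ) : Circle1)}

/-- `A` and `B` are unlinked: `B` is contained in a single connected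
component of the complement of `A`. -/
def Unlinked (A B : Set Circle1) : Prop :=
  ∃ x ∈ Aᶜ, B ⊆ connectedComponentIn Aᶜ x

/-- `C` is a connected component of `S`. -/
def IsCompOf (C S : Set Circle1) : Prop :=
  ∃ x ∈ S, C = connectedComponentIn S x

/-- The class of `x` under a relation `r`. -/
def relClass (r : Circle1 → Circle1 → Prop) (x : Circle1) : Set Circle1 := {y | r x y}

/-- A rational lamination: a closed equivalence relation on `ℚ/ℤ` with finite,
pairwise unlinked classes. -/
structure RatLam where
  rel : Circle1 → Circle1 → Prop
  rel_rat : ∀ x y, rel x y → x ∈ ratC ∧ y ∈ ratC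
  refl : ∀ x ∈ ratC, rel x x
  symm : ∀ x y, rel x y → rel y x
  trans : ∀ x y z, rel x y → rel y z → rel x z
  closed' : ∀ x ∈ ratC, ∀ y ∈ ratC,
    (x, y) ∈ closure {p : Circle1 × Circle1 | rel p.1 p.2} → rel x y
  finiteClass : ∀ x, (relClass rel x).Finite
  unlinkedClass : ∀ x y, ¬ rel x y → Unlinked (relClass rel x) (relClass rel y)

/-- `m_d` maps `A` onto `B` in a consecutive-preserving way: the image of `A` is `B`
and the connected components of the complement of `A` are sent to components of the
complement of `B` endpoint-wise. -/
def ConsecutiveImage (d : ℕ) (A B : Set Circle1) : Prop :=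
  md d '' A = B ∧
    ∀ C, IsCompOf C Aᶜ → ∃ C', IsCompOf C' Bᶜ ∧ frontier C' = md d '' frontier C

/-- A `d`-invariant rational lamination. -/
structure InvRatLam (d : ℕ) extends RatLam where
  invariant : ∀ x ∈ ratC,
    ConsecutiveImage d (relClass rel x) (relClass rel (md d x))

/-- `m_d : A → m_d(A)` is `δ`-to-one. -/
def classDeg (d : ℕ) (A : Set Circle1) (δ : ℕ) : Prop :=
  ∀ y ∈ md d '' A, Set.ncard {x | x ∈ A ∧ md d x = y} = δ

/-- The `λ`-unlinked relation on irrational angles: `θ ~ θ'` iff they lie in the same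
connected component of the complement of every `λ`-class. -/
def UnlRel (r : Circle1 → Circle1 → Prop) (θ θ' : Circle1) : Prop :=
  θ ∉ ratC ∧ θ' ∉ ratC ∧
    (θ = θ' ∨ ∀ x ∈ ratC, θ' ∈ connectedComponentIn (relClass r x)ᶜ θ)

/-- `L` is a `λ`-unlinked class. -/
def IsUnlClass (r : Circle1 → Circle1 → Prop) (L : Set Circle1) : Prop :=
  ∃ θ, θ ∉ ratC ∧ L = {θ' | UnlRel r θ θ'}

/-!
Describe an unlinked class as the set of irrational angles in one gap of the lamination. Lifting to
`ℝ` and marking each gap by the germs to the left of points, `x ↦ d x` maps every gap onto a union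
of gaps. It maps it onto a single gap unless some boundary leaf of the gap is not sent to a boundary
leaf, which happens at finitely many exceptional angles only. These are rational, so their forward
orbits form a finite set `E`.

If some image of the class consists of gaps that all touch `E`, so do all later images, and two of
them are equal because `E` has finitely many subsets. Otherwise each image lies in a single gap, and
unless two of them coincide the images are pairwise disjoint and pairwise unlinked. This is
impossible for an infinite class. Fix a small `y` for which the class contains many points at mutual
distance more than `y`. Such points stay apart under `x ↦ d x` unless two of them, in the presence
of a third, differ by almost a multiple of `1 / d`. Three such pairs at nearby positions would be
nested so closely that the middle third point is linked with one of the other pairs, so this happens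
a bounded number of times, and each time the number of separated points drops by a bounded factor.
Hence all images contain three points at mutual distance more than `y`, and two of these triangles
are so close that they are linked.
-/

/-! ### Lifted laminations and their gaps -/

theorem coe_circle_eq_iff {x y : ℝ} : (x : Circle1) = y ↔ ∃ n : ℤ, y = x + n := by
  rw [QuotientAddGroup.eq, AddSubgroup.mem_zmultiples_iff]
  simp only [zsmul_one, eq_neg_add_iff_add_eq, eq_comm]

theorem coe_circle_add_int (x : ℝ) (n : ℤ) : ((x + n : ℝ) : Circle1) = x := by
  simp

/-- The lift to `ℝ` of an equivalence relation on a subset of `ℝ/ℤ` (the points with `R x x`)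
with finite, pairwise unlinked classes. -/
structure IsLiftedLam (R : ℝ → ℝ → Prop) : Prop where
  symm : ∀ {x y}, R x y → R y x
  trans : ∀ {x y z}, R x y → R y z → R x z
  add_int : ∀ {x y} (n : ℤ), R x y → R x (y + n)
  finite_Icc : ∀ x a b, ({y | R x y} ∩ Icc a b).Finite
  rel_of_crossing : ∀ {x x' y y'}, R x x' → R y y' → x < y → y < x' → x' < y' → y' < x + 1 →
    R x y

/-- The last point before `t` of the class of `x`; it is a true maximum as soon as `R x x`. -/
def lastBefore (R : ℝ → ℝ → Prop) (x t : ℝ) : ℝ := sSup {c | R x c ∧ c < t}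

/-- The other endpoint of the boundary leaf that follows `e` around the gap just left of `e`:
the last point of the class of `e` before `e + 1`. -/
def partner (R : ℝ → ℝ → Prop) (e : ℝ) : ℝ := lastBefore R e e + 1

/-- The left germs at `t` and `u` lie in the same complementary arc of the class of `x`. -/
def SameSide (R : ℝ → ℝ → Prop) (x t u : ℝ) : Prop :=
  (lastBefore R x t : Circle1) = lastBefore R x u

/-- The left germs at `t` and `u` lie in the same gap of the lamination formed by the classes of
the points of `D`. -/
def SameGap (R : ℝ → ℝ → Prop) (D : Set ℝ) (t u : ℝ) : Prop := ∀ x ∈ D, SameSide R x t u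

/-- A union of classes, finitely many modulo `1`. -/
structure IsLocFinSaturated (R : ℝ → ℝ → Prop) (D : Set ℝ) : Prop where
  rel_self : ∀ {x}, x ∈ D → R x x
  mem_of_rel : ∀ {x y}, x ∈ D → R x y → y ∈ D
  finite_Icc : ∀ a b, (D ∩ Icc a b).Finite

/-- The left germ at `e` lies in the component of the complement of `D` that starts at `s`. -/
def ImmediatelyRight (D : Set ℝ) (s e : ℝ) : Prop := s < e ∧ ∀ c ∈ D, c ∉ Ioo s e

theorem SameGap.symm {R : ℝ → ℝ → Prop} {D : Set ℝ} {t u : ℝ} (h : SameGap R D t u) :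
    SameGap R D u t :=
  fun x hx => Eq.symm (h x hx)

theorem SameGap.trans {R : ℝ → ℝ → Prop} {D : Set ℝ} {t u v : ℝ} (h : SameGap R D t u)
    (h' : SameGap R D u v) : SameGap R D t v :=
  fun x hx => Eq.trans (h x hx) (h' x hx)

theorem le_lastBefore {R : ℝ → ℝ → Prop} {x c t : ℝ} (hc : R x c) (hct : c < t) :
    c ≤ lastBefore R x t :=
  le_csSup ⟨t, fun _ hy => hy.2.le⟩ ⟨hc, hct⟩

theorem lastBefore_eq_of_immediatelyRight {R : ℝ → ℝ → Prop} {D : Set ℝ} {b s e : ℝ}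
    (hD : IsLocFinSaturated R D) (hb : b ∈ D) (hbs : R b s) (hse : ImmediatelyRight D s e) :
    lastBefore R b e = s :=
  IsGreatest.csSup_eq ⟨⟨hbs, hse.1⟩, fun c hc =>
    not_lt.1 fun hsc => hse.2 c (hD.mem_of_rel hb hc.1) ⟨hsc, hc.2⟩⟩

namespace IsLiftedLam

variable {R : ℝ → ℝ → Prop} {D : Set ℝ} {b c e s t u x y : ℝ} (h : IsLiftedLam R)
include h

theorem rel_right (hxy : R x y) : R y y := h.trans (h.symm hxy) hxy

theorem rel_of_coe_eq (hxy : R x y) (hyt : (y : Circle1) = t) : R x t := by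
  obtain ⟨n, rfl⟩ := coe_circle_eq_iff.1 hyt
  exact h.add_int n hxy

theorem isGreatest_lastBefore (hx : R x x) (t : ℝ) :
    IsGreatest {c | R x c ∧ c < t} (lastBefore R x t) := by
  set S := {c | R x c ∧ c < t}
  have translate_mem : x + (⌈t - x⌉ - 1 : ℤ) ∈ S ∩ Icc (t - 1) t := by
    have hceil := Int.ceil_lt_add_one (t - x)
    have hceil' := Int.le_ceil (t - x)
    refine ⟨⟨h.add_int _ hx, ?_⟩, ?_, ?_⟩ <;> push_cast <;> linarith
  have hfin : (S ∩ Icc (t - 1) t).Finite :=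
    (h.finite_Icc x (t - 1) t).subset fun y hy => ⟨hy.1.1, hy.2⟩
  obtain ⟨m, hm, hmax⟩ := hfin.exists_maximalFor id _ ⟨_, translate_mem⟩
  have hgreatest : IsGreatest S m := by
    refine ⟨hm.1, fun c hc => ?_⟩
    rcases le_total m c with hmc | hcm
    · exact hmax ⟨hc, hm.2.1.trans hmc, hc.2.le⟩ hmc
    · exact hcm
  rwa [lastBefore, hgreatest.csSup_eq]

theorem rel_lastBefore (hx : R x x) (t : ℝ) : R x (lastBefore R x t) :=
  (h.isGreatest_lastBefore hx t).1.1

theorem lastBefore_lt (hx : R x x) (t : ℝ) : lastBefore R x t < t :=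
  (h.isGreatest_lastBefore hx t).1.2

theorem le_lastBefore_add_one (hx : R x x) (t : ℝ) : t ≤ lastBefore R x t + 1 := by
  by_contra! hlt
  have hrel := h.add_int 1 (h.rel_lastBefore hx t)
  rw [Int.cast_one] at hrel
  linarith [le_lastBefore hrel hlt]

theorem lastBefore_add_int (hx : R x x) (t : ℝ) (n : ℤ) :
    lastBefore R x (t + n) = lastBefore R x t + n := by
  refine IsGreatest.csSup_eq ⟨⟨h.add_int n (h.rel_lastBefore hx t), ?_⟩, fun c hc => ?_⟩
  · linarith [h.lastBefore_lt hx t]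
  · have := le_lastBefore (h.add_int (-n) hc.1) (t := t) (by push_cast; linarith [hc.2])
    push_cast at this
    linarith

theorem lastBefore_congr (hxy : R x y) (t : ℝ) : lastBefore R x t = lastBefore R y t := by
  refine congrArg sSup (Set.ext fun c => and_congr_left' ?_)
  exact ⟨h.trans (h.symm hxy), h.trans hxy⟩

theorem lastBefore_eq_of_forall_notMem_Ico (hx : R x x) (htu : t ≤ u)
    (hno : ∀ c, R x c → c ∉ Ico t u) : lastBefore R x u = lastBefore R x t := by
  refine IsGreatest.csSup_eq
    ⟨⟨h.rel_lastBefore hx t, (h.lastBefore_lt hx t).trans_le htu⟩, fun c hc => ?_⟩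
  exact le_lastBefore hc.1 (not_le.1 fun htc => hno c hc.1 ⟨htc, hc.2⟩)

theorem rel_partner (he : R e e) : R e (partner R e) := by
  simpa [partner] using h.add_int 1 (h.rel_lastBefore he e)

theorem le_partner (he : R e e) : e ≤ partner R e := h.le_lastBefore_add_one he e

theorem partner_lt (he : R e e) : partner R e < e + 1 := by
  rw [partner]
  linarith [h.lastBefore_lt he e]

theorem le_partner_of_rel (hc : R e c) (hce : c < e + 1) : c ≤ partner R e := by
  have := le_lastBefore (h.add_int (-1) hc) (t := e) (by push_cast; linarith)
  push_cast at this
  rw [partner]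
  linarith

theorem partner_add_int (he : R e e) (n : ℤ) : partner R (e + n) = partner R e + n := by
  rw [partner, ← h.lastBefore_congr (h.add_int n he), h.lastBefore_add_int he, partner]
  ring

theorem sameSide_of_coe_eq (hx : R x x) (htu : (t : Circle1) = u) : SameSide R x t u := by
  obtain ⟨n, rfl⟩ := coe_circle_eq_iff.1 htu
  rw [SameSide, h.lastBefore_add_int hx, coe_circle_add_int]

theorem sameGap_of_coe_eq (hD : ∀ x ∈ D, R x x) (htu : (t : Circle1) = u) : SameGap R D t u :=
  fun x hx => h.sameSide_of_coe_eq (hD x hx) htu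

theorem sameGap_of_forall_notMem_Ico (hD : IsLocFinSaturated R D) (htu : t ≤ u)
    (hno : ∀ c ∈ D, c ∉ Ico t u) : SameGap R D t u := fun x hx => by
  rw [SameSide, h.lastBefore_eq_of_forall_notMem_Ico (hD.rel_self hx) htu
    fun c hc => hno c (hD.mem_of_rel hx hc)]

-- Unlinkedness: a class different from that of `b` lies in one complementary arc of the latter.
theorem sameSide_of_rel (hb : R b b) (hyt : R y t) (hby : ¬ R b y) : SameSide R b y t := by
  set β := lastBefore R b y
  have hβ : R b β := h.rel_lastBefore hb y
  have hβy : β < y := h.lastBefore_lt hb y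
  have hβ1 : R b (β + 1) := by simpa using h.add_int 1 hβ
  obtain ⟨n, hn, -⟩ := existsUnique_add_zsmul_mem_Ioc one_pos t β
  rw [zsmul_one] at hn
  set t' := t + n
  have hyt' : R y t' := h.add_int n hyt
  have ht' : t' < β + 1 := hn.2.lt_of_ne fun heq =>
    hby (h.trans (heq ▸ hβ1) (h.symm hyt'))
  have key : lastBefore R b t' = β := by
    rcases le_total y t' with hle | hle
    · refine h.lastBefore_eq_of_forall_notMem_Ico hb hle fun c hc hmem => ?_
      have hyc : y < c := hmem.1.lt_of_ne fun heq => hby (heq ▸ hc)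
      have := h.rel_of_crossing hyt' (h.trans (h.symm hc) hβ1) hyc hmem.2 ht' (by linarith)
      exact hby (h.trans hc (h.symm this))
    · exact IsGreatest.csSup_eq ⟨⟨hβ, hn.1⟩, fun c hc => le_lastBefore hc.1 (hc.2.trans_le hle)⟩
  calc (β : Circle1) = lastBefore R b t' := by rw [key]
    _ = lastBefore R b t := (h.sameSide_of_coe_eq hb (coe_circle_add_int t n).symm).symm

theorem sameSide_of_immediatelyRight (hD : IsLocFinSaturated R D) (hb : b ∈ D) (hbs : ¬ R b s)
    (hse : ImmediatelyRight D s e) : SameSide R b s e := by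
  rw [SameSide, h.lastBefore_eq_of_forall_notMem_Ico (hD.rel_self hb) hse.1.le fun c hc hmem => ?_]
  exact hse.2 c (hD.mem_of_rel hb hc) ⟨hmem.1.lt_of_ne fun heq => hbs (heq ▸ hc), hmem.2⟩

theorem sameGap_of_immediatelyRight_partner (hD : IsLocFinSaturated R D) (he : e ∈ D)
    (hs : (s : Circle1) = partner R e) (hst : ImmediatelyRight D s t) : SameGap R D e t := by
  intro x hx
  have hes : R e s := h.rel_of_coe_eq (h.rel_partner (hD.rel_self he)) hs.symm
  by_cases hxe : R x e
  · rw [SameSide, lastBefore_eq_of_immediatelyRight hD hx (h.trans hxe hes) hst, hs,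
      h.lastBefore_congr hxe, partner, AddCircle.coe_add_period]
  · have hxs : ¬ R x s := fun hxs => hxe (h.trans hxs (h.symm hes))
    exact (h.sameSide_of_rel (hD.rel_self hx) hes hxe).trans
      (h.sameSide_of_immediatelyRight hD hx hxs hst)

end IsLiftedLam

namespace IsLocFinSaturated

variable {R : ℝ → ℝ → Prop} {D : Set ℝ} {s t : ℝ}

theorem exists_immediatelyRight (hD : IsLocFinSaturated R D) (hst : s < t) :
    ∃ e ≤ t, ImmediatelyRight D s e := by
  by_cases hne : (D ∩ Ioo s t).Nonempty
  · have hfin : (D ∩ Ioo s t).Finite :=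
      (hD.finite_Icc s t).subset (inter_subset_inter_right D Ioo_subset_Icc_self)
    obtain ⟨e, he, hmin⟩ := hfin.exists_minimalFor id _ hne
    exact ⟨e, he.2.2.le, he.2.1, fun c hc hmem =>
      (hmin ⟨hc, hmem.1, hmem.2.trans he.2.2⟩ hmem.2.le).not_gt hmem.2⟩
  · exact ⟨t, le_rfl, hst, fun c hc hmem => hne ⟨c, hc, hmem⟩⟩

theorem mem_iff_of_coe_eq (h : IsLiftedLam R) (hD : IsLocFinSaturated R D)
    (hst : (s : Circle1) = t) : s ∈ D ↔ t ∈ D :=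
  ⟨fun hs => hD.mem_of_rel hs (h.rel_of_coe_eq (hD.rel_self hs) hst),
    fun ht => hD.mem_of_rel ht (h.rel_of_coe_eq (hD.rel_self ht) hst.symm)⟩

theorem of_finite (h : IsLiftedLam R) {F : Set ℝ} (hF : F.Finite) :
    IsLocFinSaturated R {y | ∃ x ∈ F, R x y} where
  rel_self := fun ⟨_, _, hxy⟩ => h.rel_right hxy
  mem_of_rel := fun ⟨x, hx, hxy⟩ hyz => ⟨x, hx, h.trans hxy hyz⟩
  finite_Icc a b := by
    refine (hF.biUnion fun x _ => h.finite_Icc x a b).subset ?_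
    rintro y ⟨⟨x, hx, hxy⟩, hy⟩
    exact mem_biUnion hx ⟨hxy, hy⟩

end IsLocFinSaturated

theorem ImmediatelyRight.add_int {R : ℝ → ℝ → Prop} {D : Set ℝ} {s e : ℝ} (h : IsLiftedLam R)
    (hD : IsLocFinSaturated R D) (hse : ImmediatelyRight D s e) (n : ℤ) :
    ImmediatelyRight D (s + n) (e + n) := by
  refine ⟨by linarith [hse.1], fun c hc hmem => hse.2 (c - n) ?_ ?_⟩
  · exact (hD.mem_iff_of_coe_eq h (coe_circle_eq_iff.2 ⟨n, (sub_add_cancel c _).symm⟩)).2 hc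
  · exact ⟨by linarith [hmem.1], by linarith [hmem.2]⟩

namespace IsLiftedLam

variable {R : ℝ → ℝ → Prop} {D : Set ℝ} {t u : ℝ} (h : IsLiftedLam R)
include h

theorem partner_lt_of_sameSide {e : ℝ} (he : R e e) (heu : e < u) (hside : SameSide R e e u) :
    partner R e < u := by
  obtain ⟨n, hn⟩ := coe_circle_eq_iff.1 hside
  have hlast := h.lastBefore_lt he e
  have hle : e ≤ lastBefore R e u := le_lastBefore he heu
  have hn1 : (1 : ℝ) ≤ n := by
    have : (0 : ℝ) < n := by linarith
    exact_mod_cast this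
  rw [partner]
  linarith [h.lastBefore_lt he u]

theorem gap_induction_of_le (hD : IsLocFinSaturated R D) {P : ℝ → Prop}
    (slide : ∀ v w, P v → v ≤ w → (∀ c ∈ D, c ∉ Ico v w) → P w)
    (jump : ∀ e ∈ D, SameGap R D t e → P e → ∀ w, ImmediatelyRight D (partner R e) w → P w)
    (htu : t ≤ u) (hgap : SameGap R D t u) (base : P t) : P u := by
  suffices H : ∀ N : ℕ, ∀ v ≤ u, SameGap R D t v → P v → (D ∩ Ico v u).ncard = N → P u from
    H _ t htu (fun _ _ => rfl) base rfl
  intro N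
  induction N using Nat.strong_induction_on with
  | _ N ih =>
  intro v hvu htv hPv hN
  have hfin : (D ∩ Ico v u).Finite :=
    (hD.finite_Icc v u).subset (inter_subset_inter_right _ Ico_subset_Icc_self)
  by_cases hne : (D ∩ Ico v u).Nonempty
  · obtain ⟨e, ⟨heD, hve, heu⟩, hmin⟩ := hfin.exists_minimalFor id _ hne
    have hno : ∀ c ∈ D, c ∉ Ico v e := fun c hc hmem =>
      (hmin ⟨hc, hmem.1, hmem.2.trans heu⟩ hmem.2.le).not_gt hmem.2
    have hte : SameGap R D t e := htv.trans (h.sameGap_of_forall_notMem_Ico hD hve hno)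
    have hee := hD.rel_self heD
    have hpu := h.partner_lt_of_sameSide hee heu ((hte.symm.trans hgap) e heD)
    obtain ⟨w, hwu, hw⟩ := hD.exists_immediatelyRight hpu
    have hew : e < w := (h.le_partner hee).trans_lt hw.1
    refine ih _ ?_ w hwu (hte.trans (h.sameGap_of_immediatelyRight_partner hD heD rfl hw))
      (jump e heD hte (slide v e hPv hve hno) w hw) rfl
    rw [← hN]
    refine ncard_lt_ncard ⟨fun c hc => ⟨hc.1, ?_, hc.2.2⟩, fun hss => ?_⟩ hfin
    · exact (hve.trans hew.le).trans hc.2.1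
    · exact (hss ⟨heD, hve, heu⟩).2.1.not_gt hew
  · exact slide v u hPv hvu fun c hc hmem => hne ⟨c, hc, hmem⟩

-- Walking around a gap: every germ of the gap of `t` is reached from `t` by moving right inside
-- the complement of `D` and by jumping across boundary leaves.
theorem gap_induction (hD : IsLocFinSaturated R D) {P : ℝ → Prop}
    (periodic : ∀ v (n : ℤ), P (v + n) → P v)
    (slide : ∀ v w, P v → v ≤ w → (∀ c ∈ D, c ∉ Ico v w) → P w)
    (jump : ∀ e ∈ D, SameGap R D t e → P e → ∀ w, ImmediatelyRight D (partner R e) w → P w)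
    (hgap : SameGap R D t u) (base : P t) : P u := by
  obtain ⟨N, hN⟩ := exists_nat_ge (t - u)
  refine periodic u N (h.gap_induction_of_le hD slide jump ?_ (hgap.trans ?_) base)
  · push_cast
    linarith
  · exact h.sameGap_of_coe_eq (fun _ => hD.rel_self) (coe_circle_add_int u N).symm

end IsLiftedLam

/-! ### Gaps under `x ↦ d x` -/

theorem md_coe (d : ℕ) (x : ℝ) : md d (x : Circle1) = ((d * x : ℝ) : Circle1) := by
  rw [md, ← AddCircle.coe_nsmul, nsmul_eq_mul]

theorem coe_circle_mul_congr (d : ℕ) {x y : ℝ} (hxy : (x : Circle1) = y) :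
    ((d * x : ℝ) : Circle1) = (d * y : ℝ) := by
  rw [← md_coe, ← md_coe, hxy]

/-- The lift to `ℝ` of an equivalence relation on `ℚ/ℤ` with finite, pairwise unlinked classes
such that `x ↦ d x` maps classes onto classes. -/
structure IsLiftedInvLam (d : ℕ) (R : ℝ → ℝ → Prop) : Prop extends IsLiftedLam R where
  pos : 0 < d
  rel_self_iff : ∀ {x}, R x x ↔ ∃ q : ℚ, (q : ℝ) = x
  mul : ∀ {x y}, R x y → R (d * x) (d * y)
  exists_rel_of_mul : ∀ {x y}, R (d * x) y → ∃ w, R x w ∧ ((d * w : ℝ) : Circle1) = y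

/-- The preimage of `D` under `x ↦ d x`. -/
def preimageMul (d : ℕ) (D : Set ℝ) : Set ℝ := {x | (d : ℝ) * x ∈ D}

/-- `e` is exceptional if `x ↦ d x` does not send the boundary leaf joining `e` to `partner R e`
to the boundary leaf at `d e`. -/
def IsExceptional (d : ℕ) (R : ℝ → ℝ → Prop) (e : ℝ) : Prop :=
  R e e ∧ ((d * partner R e : ℝ) : Circle1) ≠ partner R (d * e)

section PreimageMul

variable {d : ℕ} {D : Set ℝ} {s t : ℝ}

theorem exists_mul_eq_mem_preimageMul (hd : 0 < d) {y : ℝ} (hy : y ∈ D) :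
    ∃ x ∈ preimageMul d D, (d : ℝ) * x = y := by
  have hdy : (d : ℝ) * (y / d) = y := mul_div_cancel₀ y (Nat.cast_ne_zero.2 hd.ne')
  exact ⟨y / d, (hdy.symm ▸ hy : (d : ℝ) * (y / d) ∈ D), hdy⟩

theorem forall_notMem_Ico_mul (hd : 0 < d) (hno : ∀ c ∈ preimageMul d D, c ∉ Ico s t) :
    ∀ c ∈ D, c ∉ Ico (d * s) (d * t) := by
  intro y hy hmem
  obtain ⟨x, hx, rfl⟩ := exists_mul_eq_mem_preimageMul hd hy
  have hd' : (0 : ℝ) < d := Nat.cast_pos.2 hd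
  exact hno x hx ⟨le_of_mul_le_mul_left hmem.1 hd', lt_of_mul_lt_mul_left hmem.2 hd'.le⟩

theorem ImmediatelyRight.mul (hd : 0 < d) (hst : ImmediatelyRight (preimageMul d D) s t) :
    ImmediatelyRight D (d * s) (d * t) := by
  have hd' : (0 : ℝ) < d := Nat.cast_pos.2 hd
  refine ⟨mul_lt_mul_of_pos_left hst.1 hd', fun y hy hmem => ?_⟩
  obtain ⟨x, hx, rfl⟩ := exists_mul_eq_mem_preimageMul hd hy
  exact hst.2 x hx ⟨lt_of_mul_lt_mul_left hmem.1 hd'.le, lt_of_mul_lt_mul_left hmem.2 hd'.le⟩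

theorem ImmediatelyRight.of_mul (hd : 0 < d) (hst : ImmediatelyRight D (d * s) (d * t)) :
    ImmediatelyRight (preimageMul d D) s t := by
  have hd' : (0 : ℝ) < d := Nat.cast_pos.2 hd
  exact ⟨lt_of_mul_lt_mul_left hst.1 hd'.le, fun c hc hmem => hst.2 _ hc
    ⟨mul_lt_mul_of_pos_left hmem.1 hd', mul_lt_mul_of_pos_left hmem.2 hd'⟩⟩

end PreimageMul

theorem IsLiftedLam.coe_partner_congr {R : ℝ → ℝ → Prop} (h : IsLiftedLam R) {x y : ℝ}
    (hx : R x x) (hxy : (x : Circle1) = y) : (partner R x : Circle1) = partner R y := by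
  obtain ⟨n, rfl⟩ := coe_circle_eq_iff.1 hxy
  rw [h.partner_add_int hx, coe_circle_add_int]

namespace IsLiftedInvLam

variable {d : ℕ} {R : ℝ → ℝ → Prop} {D : Set ℝ} {a b e s t u v w x : ℝ} (h : IsLiftedInvLam d R)
include h

theorem cast_pos : (0 : ℝ) < d := Nat.cast_pos.2 h.pos

theorem rel_self_of_mul (hx : R (d * x) (d * x)) : R x x := by
  obtain ⟨q, hq⟩ := h.rel_self_iff.1 hx
  refine h.rel_self_iff.2 ⟨q / d, ?_⟩
  rw [Rat.cast_div, Rat.cast_natCast, hq, mul_div_cancel_left₀ x h.cast_pos.ne']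

theorem isLocFinSaturated_preimageMul (hD : IsLocFinSaturated R D) :
    IsLocFinSaturated R (preimageMul d D) where
  rel_self hx := h.rel_self_of_mul (hD.rel_self hx)
  mem_of_rel hx hxy := hD.mem_of_rel hx (h.mul hxy)
  finite_Icc a b := by
    refine Set.Finite.of_finite_image ((hD.finite_Icc (d * a) (d * b)).subset ?_)
      (mul_right_injective₀ h.cast_pos.ne').injOn
    rintro _ ⟨x, ⟨hx, hax, hxb⟩, rfl⟩
    exact ⟨hx, mul_le_mul_of_nonneg_left hax h.cast_pos.le,
      mul_le_mul_of_nonneg_left hxb h.cast_pos.le⟩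

theorem sameGap_mul_of_forall_notMem_Ico (hD : IsLocFinSaturated R D) (hvw : v ≤ w)
    (hno : ∀ c ∈ preimageMul d D, c ∉ Ico v w) : SameGap R D (d * v) (d * w) :=
  h.sameGap_of_forall_notMem_Ico hD (mul_le_mul_of_nonneg_left hvw h.cast_pos.le)
    (forall_notMem_Ico_mul h.pos hno)

theorem exists_sameGap_of_slide (hD : IsLocFinSaturated R D) (hvw : v ≤ w)
    (hno : ∀ c ∈ D, c ∉ Ico v w) (htv : ((d * t : ℝ) : Circle1) = v) :
    ∃ u, SameGap R (preimageMul d D) t u ∧ ((d * u : ℝ) : Circle1) = w := by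
  have hd := h.cast_pos
  obtain ⟨n, rfl⟩ := coe_circle_eq_iff.1 htv
  have hdu : d * ((w - n) / d) = w - n := mul_div_cancel₀ _ hd.ne'
  refine ⟨(w - n) / d, h.sameGap_of_forall_notMem_Ico (h.isLocFinSaturated_preimageMul hD) ?_ ?_,
    coe_circle_eq_iff.2 ⟨n, by rw [hdu, sub_add_cancel]⟩⟩
  · rw [le_div_iff₀ hd]
    linarith
  · intro c hc hmem
    refine hno (d * c + n) ?_ ⟨?_, ?_⟩
    · exact (hD.mem_iff_of_coe_eq h.toIsLiftedLam (coe_circle_add_int _ n)).2 hc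
    · linarith [mul_le_mul_of_nonneg_left hmem.1 hd.le]
    · linarith [mul_lt_mul_of_pos_left hmem.2 hd]

theorem exists_sameGap_of_coe_mul_partner (hD : IsLocFinSaturated R D) (he : e ∈ preimageMul d D)
    (hs : ((d * partner R e : ℝ) : Circle1) = s) (hsw : ImmediatelyRight D s w) :
    ∃ u, SameGap R (preimageMul d D) e u ∧ ((d * u : ℝ) : Circle1) = w := by
  obtain ⟨n, hn⟩ := coe_circle_eq_iff.1 hs.symm
  have hdu : d * ((w + n) / d) = w + n := mul_div_cancel₀ _ h.cast_pos.ne'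
  refine ⟨(w + n) / d, h.sameGap_of_immediatelyRight_partner (h.isLocFinSaturated_preimageMul hD)
    he rfl (ImmediatelyRight.of_mul h.pos ?_), by rw [hdu, coe_circle_add_int]⟩
  rw [hdu, hn]
  exact hsw.add_int h.toIsLiftedLam hD n

theorem sameSide_mul_of_immediatelyRight_partner (hD : IsLocFinSaturated R D) (hb : b ∈ D)
    (he : e ∈ preimageMul d D) (hbe : ¬ R b (d * e))
    (hw : ImmediatelyRight (preimageMul d D) (partner R e) w) :
    SameSide R b (d * e) (d * w) := by
  have hrel : R (d * e) (d * partner R e) :=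
    h.mul (h.rel_partner ((h.isLocFinSaturated_preimageMul hD).rel_self he))
  have hbp : ¬ R b (d * partner R e) := fun hbp => hbe (h.trans hbp (h.symm hrel))
  exact (h.sameSide_of_rel (hD.rel_self hb) hrel hbe).trans
    (h.sameSide_of_immediatelyRight hD hb hbp (hw.mul h.pos))

-- Once around the gap left of `a`, the image must leave the arc of the class of `d a` ending at
-- `d a` and come back to it; it can only come back at the other endpoint of that arc.
theorem exists_coe_mul_partner_eq (hD : IsLocFinSaturated R D) (ha : a ∈ preimageMul d D) :
    ∃ e ∈ preimageMul d D, SameGap R (preimageMul d D) a e ∧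
      ((d * partner R e : ℝ) : Circle1) = partner R (d * a) := by
  by_contra! hne
  have hD' := h.isLocFinSaturated_preimageMul hD
  have hda : R (d * a) (d * a) := hD.rel_self ha
  have leaves : ∀ e ∈ preimageMul d D, SameGap R (preimageMul d D) a e → R (d * a) (d * e) →
      ∀ w, ImmediatelyRight (preimageMul d D) (partner R e) w →
        ¬ SameSide R (d * a) (d * a) (d * w) := by
    intro e he hae hrel w hw hside
    have hpartner := h.trans hrel (h.mul (h.rel_partner (hD'.rel_self he)))
    rw [SameSide, lastBefore_eq_of_immediatelyRight hD ha hpartner (hw.mul h.pos)] at hside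
    exact hne e he hae (by rw [← hside, partner, AddCircle.coe_add_period])
  obtain ⟨e₀, -, he₀⟩ := hD'.exists_immediatelyRight (lt_add_one (partner R a))
  have hae₀ := h.sameGap_of_immediatelyRight_partner hD' ha rfl he₀
  have never_returns : ¬ SameSide R (d * a) (d * a) (d * a) := by
    refine h.gap_induction hD' (P := fun x => ¬ SameSide R (d * a) (d * a) (d * x))
      (fun v n hv hv' => hv (hv'.trans ?_)) (fun v w hv hvw hno hw => hv (hw.trans ?_))
      (fun e he he₀e hPe w hw => ?_) hae₀.symm (leaves a ha (fun _ _ => rfl) hda e₀ he₀)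
    · exact h.sameSide_of_coe_eq hda (coe_circle_mul_congr d (coe_circle_add_int v n).symm)
    · exact (h.sameGap_mul_of_forall_notMem_Ico hD hvw hno _ ha).symm
    · by_cases hrel : R (d * a) (d * e)
      · exact leaves e he (hae₀.trans he₀e) hrel w hw
      · exact fun hside => hPe (hside.trans
          (h.sameSide_mul_of_immediatelyRight_partner hD ha he hrel hw).symm)
  exact never_returns rfl

theorem exists_sameGap_preimageMul (hD : IsLocFinSaturated R D) (hgap : SameGap R D (d * t) v) :
    ∃ u, SameGap R (preimageMul d D) t u ∧ ((d * u : ℝ) : Circle1) = v := by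
  refine h.gap_induction hD
    (P := fun x => ∃ u, SameGap R (preimageMul d D) t u ∧ ((d * u : ℝ) : Circle1) = x)
    ?_ ?_ ?_ hgap ⟨t, fun _ _ => rfl, rfl⟩
  · rintro x n ⟨u, htu, hu⟩
    exact ⟨u, htu, hu.trans (coe_circle_add_int x n)⟩
  · rintro x w ⟨u, htu, hu⟩ hxw hno
    obtain ⟨u', huu', hu'⟩ := h.exists_sameGap_of_slide hD hxw hno hu
    exact ⟨u', htu.trans huu', hu'⟩
  · rintro x hx - ⟨u, htu, hu⟩ w hw
    have huD : u ∈ preimageMul d D := (hD.mem_iff_of_coe_eq h.toIsLiftedLam hu).2 hx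
    obtain ⟨e, he, hue, hpartner⟩ := h.exists_coe_mul_partner_eq hD huD
    rw [h.coe_partner_congr (hD.rel_self huD) hu] at hpartner
    obtain ⟨u', heu', hu'⟩ := h.exists_sameGap_of_coe_mul_partner hD he hpartner hw
    exact ⟨u', htu.trans (hue.trans heu'), hu'⟩

theorem exists_isExceptional_preimageMul (hD : IsLocFinSaturated R D)
    (hgap : SameGap R (preimageMul d D) t u) (hsplit : ¬ SameGap R D (d * t) (d * u)) :
    ∃ e, IsExceptional d R e ∧ SameGap R D (d * t) (d * e) := by
  by_contra! hne
  have hD' := h.isLocFinSaturated_preimageMul hD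
  refine hsplit (h.gap_induction hD' (P := fun x => SameGap R D (d * t) (d * x))
    (fun v n hv => hv.trans ?_) (fun v w hv hvw hno => hv.trans ?_) (fun e he _ hte w hw => ?_)
    hgap fun _ _ => rfl)
  · exact h.sameGap_of_coe_eq (fun _ => hD.rel_self)
      (coe_circle_mul_congr d (coe_circle_add_int v n))
  · exact h.sameGap_mul_of_forall_notMem_Ico hD hvw hno
  · have hpartner : ((d * partner R e : ℝ) : Circle1) = partner R (d * e) := by
      by_contra hexc
      exact hne e ⟨hD'.rel_self he, hexc⟩ hte
    exact hte.trans (h.sameGap_of_immediatelyRight_partner hD he hpartner (hw.mul h.pos))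

end IsLiftedInvLam

theorem exists_ne_dist_lt_of_infinite {α β : Type*} [PseudoMetricSpace β] {S : Set α}
    (hS : S.Infinite) {f : α → β} (hf : TotallyBounded (f '' S)) {ε : ℝ} (hε : 0 < ε) :
    ∃ x ∈ S, ∃ y ∈ S, x ≠ y ∧ dist (f x) (f y) < ε := by
  obtain ⟨F, hF, hcover⟩ := Metric.totallyBounded_iff.1 hf (ε / 2) (half_pos hε)
  have : Nonempty β := ⟨f hS.nonempty.some⟩
  have hball : ∀ x ∈ S, ∃ c ∈ F, dist (f x) c < ε / 2 := fun x hx => by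
    simpa using hcover (mem_image_of_mem f hx)
  choose! c hcF hc using hball
  obtain ⟨x, hx, y, hy, hxy, hcxy⟩ := hS.exists_ne_map_eq_of_mapsTo hcF hF
  refine ⟨x, hx, y, hy, hxy, ?_⟩
  calc dist (f x) (f y) ≤ dist (f x) (c x) + dist (f y) (c x) := dist_triangle_right _ _ _
    _ < ε / 2 + ε / 2 := add_lt_add (hc x hx) (hcxy ▸ hc y hy)
    _ = ε := add_halves ε

theorem IsLiftedLam.exists_add_int_mem_Ioo_partner {R : ℝ → ℝ → Prop} (h : IsLiftedLam R)
    {z u q : ℝ} (hz : R z z) (hu : u ∈ Ioo (partner R z) (z + 1)) (huq : R u q) :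
    ∃ j : ℤ, q + j ∈ Ioo (partner R z) (z + 1) := by
  have hzu : ¬ R z u := fun hzu => (h.le_partner_of_rel hzu hu.2).not_gt hu.1
  have hlast : lastBefore R z u = partner R z :=
    IsGreatest.csSup_eq ⟨⟨h.rel_partner hz, hu.1⟩, fun c hc =>
      h.le_partner_of_rel hc.1 (hc.2.trans hu.2)⟩
  obtain ⟨j, hj⟩ := coe_circle_eq_iff.1 (h.sameSide_of_rel hz huq hzu).symm
  rw [hlast, ← h.lastBefore_add_int hz] at hj
  have hz1 : R z (z + 1) := by simpa using h.add_int 1 hz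
  refine ⟨j, hj ▸ h.lastBefore_lt hz (q + j), lt_of_le_of_ne (not_lt.1 fun hlt => ?_) fun heq => ?_⟩
  · exact ((le_lastBefore hz1 hlt).trans_eq hj.symm).not_gt (h.partner_lt hz)
  · exact hzu (h.trans (heq ▸ hz1) (h.symm (h.add_int j huq)))

namespace IsLiftedInvLam

variable {d : ℕ} {R : ℝ → ℝ → Prop} {z z' : ℝ} (h : IsLiftedInvLam d R)
include h

theorem exists_rel_mul_sub_eq (hz : R z z) :
    ∃ w ∈ Icc z (partner R z), R z w ∧
      ∃ k : ℤ, d * (w - z) = partner R (d * z) - d * z + k := by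
  obtain ⟨w, hzw, hw⟩ := h.exists_rel_of_mul (h.rel_partner (h.mul hz))
  obtain ⟨n, hn, -⟩ := existsUnique_add_zsmul_mem_Ico one_pos w z
  rw [zsmul_one] at hn
  obtain ⟨k, hk⟩ := coe_circle_eq_iff.1 hw.symm
  refine ⟨w + n, ⟨hn.1, h.le_partner_of_rel (h.add_int n hzw) hn.2⟩, h.add_int n hzw,
    k + d * n, ?_⟩
  push_cast
  linear_combination hk

theorem fract_mul_partner_sub_lt (hexc : IsExceptional d R z) :
    Int.fract (d * (partner R z - z)) < partner R (d * z) - d * z := by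
  obtain ⟨hz, hne⟩ := hexc
  set k := ⌊d * (partner R z - z)⌋
  have hrel : R (d * z) (d * partner R z + (-k : ℤ)) := h.add_int _ (h.mul (h.rel_partner hz))
  have hfract : Int.fract (d * (partner R z - z)) = d * partner R z + (-k : ℤ) - d * z := by
    rw [Int.fract]
    push_cast
    ring
  have hle : d * partner R z + (-k : ℤ) ≤ partner R (d * z) :=
    h.le_partner_of_rel hrel (by linarith [Int.fract_lt_one (d * (partner R z - z))])
  rw [hfract]
  exact sub_lt_sub_right (hle.lt_of_ne fun heq => hne (by rw [← heq, coe_circle_add_int])) _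

theorem exists_rel_mul_sub_lt_floor (hexc : IsExceptional d R z) :
    ∃ w, R z w ∧ d * (w - z) < ⌊d * (partner R z - z)⌋ ∧
      d * (partner R z - w) < ⌊d * (partner R z - z)⌋ ∧ w ∈ Icc z (partner R z) := by
  obtain ⟨w, hw, hzw, m, hm⟩ := h.exists_rel_mul_sub_eq hexc.1
  have hfract := h.fract_mul_partner_sub_lt hexc
  have hfloor := Int.floor_add_fract (d * (partner R z - z))
  set k := ⌊d * (partner R z - z)⌋
  have hgap := h.partner_lt (h.mul hexc.1)
  have hzw' : 0 ≤ d * (w - z) := mul_nonneg h.cast_pos.le (sub_nonneg.2 hw.1)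
  have hwY : d * (w - z) ≤ d * (partner R z - z) :=
    mul_le_mul_of_nonneg_left (by linarith [hw.2]) h.cast_pos.le
  have hmk : m + 1 ≤ k := by
    have : (m : ℝ) < k := by linarith
    exact_mod_cast this
  have hm0 : 0 ≤ m := by
    have : (-1 : ℝ) < m := by linarith
    have : -1 < m := by exact_mod_cast this
    lia
  have hmk' : (m : ℝ) + 1 ≤ k := by exact_mod_cast hmk
  have hm0' : (0 : ℝ) ≤ m := by exact_mod_cast hm0
  exact ⟨w, hzw, by linarith, by linarith, hw⟩

theorem floor_mul_partner_sub_lt (hz : R z z) : ⌊d * (partner R z - z)⌋ < d := by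
  rw [Int.floor_lt, Int.cast_natCast]
  exact mul_lt_of_lt_one_right h.cast_pos (by linarith [h.partner_lt hz])

-- Otherwise the arc from `partner R z` to `z + 1` is so short that it contains a preimage `u` of
-- `partner R (d * z)` but no preimage of `d * z`; the class of `u` has nowhere to go.
theorem floor_add_two_le (hexc : IsExceptional d R z) : ⌊d * (partner R z - z)⌋ + 2 ≤ d := by
  have hd := h.cast_pos
  have hz := hexc.1
  have hfract := h.fract_mul_partner_sub_lt hexc
  have hfloor := Int.floor_add_fract (d * (partner R z - z))
  have hfract0 := Int.fract_nonneg (d * (partner R z - z))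
  have hkd := h.floor_mul_partner_sub_lt hz
  set k := ⌊d * (partner R z - z)⌋
  by_contra hlt
  have hk : (k : ℝ) = d - 1 := by
    rw [show k = d - 1 by lia]
    push_cast
    rfl
  obtain ⟨u, hu⟩ : ∃ u, d * u = partner R (d * z) + k := ⟨_, mul_div_cancel₀ _ hd.ne'⟩
  have hmem : u ∈ Ioo (partner R z) (z + 1) := by
    constructor <;> refine lt_of_mul_lt_mul_left ?_ hd.le
    · linarith
    · linarith [h.partner_lt (h.mul hz)]
  have hrel : R (d * u) (d * z) := by
    rw [hu]
    exact h.symm (h.add_int k (h.rel_partner (h.mul hz)))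
  obtain ⟨q, huq, hq⟩ := h.exists_rel_of_mul hrel
  obtain ⟨j, hj⟩ := h.exists_add_int_mem_Ioo_partner hz hmem huq
  obtain ⟨n, hn⟩ := coe_circle_eq_iff.1 hq
  have hlower := mul_lt_mul_of_pos_left hj.1 hd
  have hupper := mul_lt_mul_of_pos_left hj.2 hd
  have hlower' : ((d - 1 : ℤ) : ℝ) < (d * j - n : ℤ) := by
    push_cast
    linarith
  have hupper' : ((d * j - n : ℤ) : ℝ) < (d : ℤ) := by
    push_cast
    linarith
  have := Int.cast_lt.1 hlower'
  have := Int.cast_lt.1 hupper'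
  lia

-- Leaves of nearby exceptional points would be nested, and then the point `w` of
-- `exists_rel_mul_sub_lt_floor` for the outer one would lie inside the inner one.
theorem not_isExceptional_of_close (hexc : IsExceptional d R z) (hzz' : z < z')
    (hclose : 3 * (d * (z' - z)) < 1) (hclose' : 3 * (d * (partner R z' - partner R z)) < 1)
    (hfloor : ⌊d * (partner R z - z)⌋ = ⌊d * (partner R z' - z')⌋) : ¬ IsExceptional d R z' := by
  intro hexc'
  have hd := h.cast_pos
  have hz := hexc.1
  have hz' := hexc'.1
  have hk2 : ((⌊d * (partner R z - z)⌋ + 2 : ℤ) : ℝ) ≤ (d : ℤ) :=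
    Int.cast_le.2 (h.floor_add_two_le hexc)
  obtain ⟨w, hzw, hw₁, hw₂, hw⟩ := h.exists_rel_mul_sub_lt_floor hexc
  have hY := h.rel_partner hz
  have hY' := h.rel_partner hz'
  have hlt_floor := Int.lt_floor_add_one (d * (partner R z - z))
  have hfloor_le := Int.floor_le (d * (partner R z - z))
  have hfloor_le' := Int.floor_le (d * (partner R z' - z'))
  rw [← hfloor] at hfloor_le'
  set k := ⌊d * (partner R z - z)⌋
  push_cast at hk2
  have hkpos : (1 : ℝ) ≤ k := by
    have : 0 ≤ d * (w - z) := mul_nonneg hd.le (sub_nonneg.2 hw.1)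
    have : (0 : ℝ) < k := by linarith
    exact_mod_cast this
  have hz'Y : z' < partner R z := lt_of_mul_lt_mul_left (by linarith) hd.le
  have hY'z : partner R z' < z + 1 := lt_of_mul_lt_mul_left (by linarith) hd.le
  have hrel : ¬ R z z' := fun hrel => hY'z.not_ge <| h.le_partner_of_rel
    (by simpa using h.add_int 1 (h.symm hrel)) (by linarith)
  have disjoint : ∀ {c}, R z c → ¬ R z' c := fun hc hc' => hrel (h.trans hc (h.symm hc'))
  rcases lt_trichotomy (partner R z) (partner R z') with hlt | heq | hgt
  · exact hrel (h.rel_of_crossing hY hY' hzz' hz'Y hlt hY'z)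
  · exact disjoint hY (heq ▸ hY')
  · have hz'w : z' < w := by
      by_contra! hle
      linarith [mul_le_mul_of_nonneg_left (show partner R z' - z' ≤ partner R z - w by linarith)
        hd.le]
    have hwY' : w < partner R z' := by
      by_contra! hle
      linarith [mul_le_mul_of_nonneg_left (show partner R z' - z' ≤ w - z by linarith) hd.le]
    exact disjoint hzw (h.rel_of_crossing hY' (h.trans (h.symm hzw) hY) hz'w hwY' hgt
      (by linarith [h.partner_lt hz]))

theorem isExceptional_of_coe_eq (hexc : IsExceptional d R z) (hzz' : (z : Circle1) = z') :
    IsExceptional d R z' := by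
  refine ⟨h.rel_right (h.rel_of_coe_eq hexc.1 hzz'), ?_⟩
  rw [← coe_circle_mul_congr d (h.coe_partner_congr hexc.1 hzz'),
    ← h.coe_partner_congr (h.mul hexc.1) (coe_circle_mul_congr d hzz')]
  exact hexc.2

theorem finite_isExceptional : (Ico 0 1 ∩ {z | IsExceptional d R z}).Finite := by
  have hd := h.cast_pos
  by_contra hinf
  set f : ℝ → ℝ × ℝ × ℤ := fun z => (z, partner R z, ⌊d * (partner R z - z)⌋)
  have hbdd : TotallyBounded (f '' (Ico 0 1 ∩ {z | IsExceptional d R z})) := by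
    have hcompact : IsCompact (Icc (0 : ℝ) 1 ×ˢ Icc (0 : ℝ) 2 ×ˢ Icc (0 : ℤ) d) :=
      isCompact_Icc.prod (isCompact_Icc.prod isCompact_Icc)
    refine hcompact.totallyBounded.subset ?_
    rintro _ ⟨z, ⟨hz, hexc⟩, rfl⟩
    have hle := h.le_partner hexc.1
    have hlt := h.partner_lt hexc.1
    exact ⟨Ico_subset_Icc_self hz, ⟨hz.1.trans hle, by linarith [hz.2]⟩,
      Int.floor_nonneg.2 (mul_nonneg hd.le (sub_nonneg.2 hle)),
      (h.floor_mul_partner_sub_lt hexc.1).le⟩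
  have hε : 0 < 1 / (3 * d : ℝ) := by positivity
  obtain ⟨z, hz, z', hz', hne, hdist⟩ := exists_ne_dist_lt_of_infinite hinf hbdd hε
  wlog hlt : z < z' generalizing z z'
  · exact this z' hz' z hz hne.symm (dist_comm (f z) _ ▸ hdist) (hne.symm.lt_of_le (not_lt.1 hlt))
  simp only [f, Prod.dist_eq, max_lt_iff, Real.dist_eq, abs_sub_comm _ z',
    abs_sub_comm _ (partner R z')] at hdist
  obtain ⟨hdist₁, hdist₂, hdist₃⟩ := hdist
  have mul_lt_one : ∀ {x : ℝ}, |x| < 1 / (3 * d) → 3 * (d * x) < 1 := fun {x} hx => by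
    have := (lt_div_iff₀ (by positivity)).1 ((le_abs_self x).trans_lt hx)
    linarith
  refine h.not_isExceptional_of_close hz.2 hlt (mul_lt_one hdist₁) (mul_lt_one hdist₂) ?_ hz'.2
  rw [← sub_eq_zero, ← Int.abs_lt_one_iff]
  have hd1 : (1 : ℝ) ≤ d := Nat.one_le_cast.2 h.pos
  have : 1 / (3 * d : ℝ) ≤ 1 := (div_le_one (by positivity)).2 (by linarith)
  rw [Int.dist_eq] at hdist₃
  exact_mod_cast hdist₃.trans_le this

end IsLiftedInvLam

/-- The points that belong to a class. -/
def classSupport (R : ℝ → ℝ → Prop) : Set ℝ := {x | R x x}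

theorem SameGap.mono {R : ℝ → ℝ → Prop} {D D' : Set ℝ} {t u : ℝ} (hD : D ⊆ D')
    (h : SameGap R D' t u) : SameGap R D t u :=
  fun x hx => h x (hD hx)

theorem exists_forall_of_forall_finite_subset {α β : Type*} {S : Set α} {Q : Set β}
    {p : β → α → Prop} (hS : S.Finite)
    (hex : ∀ F ⊆ Q, F.Finite → ∃ c ∈ S, ∀ x ∈ F, p x c) : ∃ c ∈ S, ∀ x ∈ Q, p x c := by
  by_contra! hbad
  choose x hxQ hpx using hbad
  have := hS.to_subtype
  obtain ⟨c, hc, hpc⟩ := hex (range fun c : S => x c c.2) (range_subset_iff.2 fun c => hxQ c c.2)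
    (finite_range _)
  exact hpx c hc (hpc _ (mem_range_self (⟨c, hc⟩ : S)))

theorem finite_setOf_md_eq {d : ℕ} (hd : 0 < d) (y : Circle1) : {c | md d c = y}.Finite := by
  rcases {c | md d c = y}.eq_empty_or_nonempty with hempty | ⟨c₀, hc₀⟩
  · exact hempty ▸ finite_empty
  · refine ((AddCircle.finite_torsion 1 hd).preimage (sub_left_injective (b := c₀)).injOn).subset ?_
    intro c hc
    change d • (c - c₀) = 0
    rw [smul_sub]
    exact sub_eq_zero.2 (hc.trans hc₀.symm)

theorem IsLiftedLam.lastBefore_mono {R : ℝ → ℝ → Prop} (h : IsLiftedLam R) {x t u : ℝ}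
    (hx : R x x) (htu : t ≤ u) : lastBefore R x t ≤ lastBefore R x u :=
  le_lastBefore (h.rel_lastBefore hx t) ((h.lastBefore_lt hx t).trans_le htu)

theorem IsLiftedLam.sameGap_of_crossing {R : ℝ → ℝ → Prop} (h : IsLiftedLam R) {D : Set ℝ}
    {t t' u u' : ℝ} (hD : ∀ x ∈ D, R x x) (ht : SameGap R D t t') (hu : SameGap R D u u')
    (htu : t < u) (hut' : u < t') (htu' : t' < u') (hu't : u' < t + 1) : SameGap R D t u := by
  intro x hx
  obtain ⟨n, hn⟩ := coe_circle_eq_iff.1 (ht x hx)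
  have hle₁ := h.lastBefore_mono (hD x hx) htu.le
  have hle₂ := h.lastBefore_mono (hD x hx) hut'.le
  have hle₃ := h.lastBefore_mono (hD x hx) htu'.le
  have hle₄ := h.lastBefore_mono (hD x hx) hu't.le
  have hperiod := h.lastBefore_add_int (hD x hx) t 1
  rw [Int.cast_one] at hperiod
  rcases le_or_gt n 0 with hn0 | hn0
  · have : (n : ℝ) ≤ 0 := Int.cast_nonpos.2 hn0
    exact congrArg _ (by linarith)
  · have : (1 : ℝ) ≤ n := by exact_mod_cast hn0
    refine .trans ?_ (hu x hx).symm
    exact coe_circle_eq_iff.2 ⟨1, by push_cast; linarith⟩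

namespace IsLiftedInvLam

variable {d : ℕ} {R : ℝ → ℝ → Prop} {t u v : ℝ} (h : IsLiftedInvLam d R)
include h

theorem exists_sameGap_of_mul (hgap : SameGap R (classSupport R) (d * t) v) :
    ∃ u, SameGap R (classSupport R) t u ∧ ((d * u : ℝ) : Circle1) = v := by
  obtain ⟨c, hc, hside⟩ : ∃ c ∈ {c : Circle1 | md d c = v}, ∀ x ∈ classSupport R,
      ∃ u : ℝ, (u : Circle1) = c ∧ SameSide R x t u := by
    refine exists_forall_of_forall_finite_subset (finite_setOf_md_eq h.pos v) fun F hF hfin => ?_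
    have hD := IsLocFinSaturated.of_finite h.toIsLiftedLam (hfin.image (d * · : ℝ → ℝ))
    obtain ⟨u, htu, hu⟩ := h.exists_sameGap_preimageMul hD (hgap.mono fun _ hx => hD.rel_self hx)
    exact ⟨u, (md_coe d u).trans hu, fun x hx =>
      ⟨u, rfl, htu x ⟨d * x, mem_image_of_mem _ hx, h.mul (hF hx)⟩⟩⟩
  obtain ⟨u, rfl⟩ := QuotientAddGroup.mk_surjective c
  refine ⟨u, fun x hx => ?_, (md_coe d u).symm.trans hc⟩
  obtain ⟨u', hu', htu'⟩ := hside x hx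
  exact htu'.trans (h.sameSide_of_coe_eq hx hu')

theorem exists_isExceptional_of_split (hgap : SameGap R (classSupport R) t u)
    (hsplit : ¬ SameGap R (classSupport R) (d * t) (d * u)) :
    ∃ e, IsExceptional d R e ∧ SameGap R (classSupport R) (d * t) (d * e) := by
  obtain ⟨x₀, hx₀, hside⟩ : ∃ x₀ ∈ classSupport R, ¬ SameSide R x₀ (d * t) (d * u) := by
    simpa [SameGap] using hsplit
  obtain ⟨e, ⟨-, he⟩, hte⟩ : ∃ e ∈ Ico 0 1 ∩ {e | IsExceptional d R e}, ∀ x ∈ classSupport R,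
      SameSide R x (d * t) (d * e) := by
    refine exists_forall_of_forall_finite_subset h.finite_isExceptional fun F hF hfin => ?_
    have hD := IsLocFinSaturated.of_finite h.toIsLiftedLam (hfin.insert x₀)
    obtain ⟨e, he, hte⟩ := h.exists_isExceptional_preimageMul hD
      (hgap.mono fun _ hx => (h.isLocFinSaturated_preimageMul hD).rel_self hx)
      fun hsame => hside (hsame x₀ ⟨x₀, mem_insert x₀ F, hx₀⟩)
    have hfract : (e : Circle1) = Int.fract e := (AddCircle.coe_fract e).symm
    refine ⟨Int.fract e, ⟨⟨Int.fract_nonneg e, Int.fract_lt_one e⟩,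
      h.isExceptional_of_coe_eq he hfract⟩, fun x hx => ?_⟩
    exact (hte x ⟨x, mem_insert_of_mem x₀ hx, hF hx⟩).trans
      (h.sameSide_of_coe_eq (hF hx) (coe_circle_mul_congr d hfract))
  exact ⟨e, he, hte⟩

theorem isOfFinAddOrder_of_isExceptional {e : ℝ} (he : IsExceptional d R e) :
    IsOfFinAddOrder (e : Circle1) := by
  obtain ⟨q, rfl⟩ := h.rel_self_iff.1 he.1
  refine isOfFinAddOrder_iff_nsmul_eq_zero.2 ⟨q.den, q.den_pos, ?_⟩
  rw [← AddCircle.coe_nsmul, nsmul_eq_mul, ← Rat.cast_natCast, ← Rat.cast_mul, Rat.den_mul_eq_num,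
    Rat.cast_intCast]
  simp

theorem exists_finite_mapsTo_isExceptional :
    ∃ E : Set Circle1, E.Finite ∧ MapsTo (md d) E E ∧
      ∀ e, IsExceptional d R e → (e : Circle1) ∈ E := by
  refine ⟨⋃ e ∈ Ico 0 1 ∩ {e | IsExceptional d R e},
    (AddSubmonoid.multiples (e : Circle1) : Set Circle1), ?_, ?_, fun e he => ?_⟩
  · exact h.finite_isExceptional.biUnion fun e he =>
      (h.isOfFinAddOrder_of_isExceptional he.2).finite_multiples
  · exact mapsTo_iUnion₂_iUnion₂ fun e _ _ hc => nsmul_mem hc d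
  · have hfract : ((Int.fract e : ℝ) : Circle1) = e := AddCircle.coe_fract e
    refine mem_biUnion (x := Int.fract e) ⟨⟨Int.fract_nonneg e, Int.fract_lt_one e⟩,
      h.isExceptional_of_coe_eq he hfract.symm⟩ ?_
    rw [hfract]
    exact AddSubmonoid.mem_multiples (e : Circle1)

end IsLiftedInvLam

/-! ### Wandering sequences of unlinked sets -/

/-- A sequence of pairwise disjoint and pairwise unlinked sets, each mapped into the next one by
`x ↦ d x`. Linking of two sets is expressed by lifts `a < a' < b < b' < a + 1` to `ℝ`. -/
structure IsWandering (d : ℕ) (T : ℕ → Set Circle1) : Prop where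
  mapsTo : ∀ n, MapsTo (md d) (T n) (T (n + 1))
  pairwise_disjoint : Pairwise (Disjoint on T)
  not_crossing : ∀ {n n'}, n ≠ n' → ∀ {a b a' b' : ℝ}, ↑a ∈ T n → ↑b ∈ T n → ↑a' ∈ T n' →
    ↑b' ∈ T n' → a < a' → a' < b → b < b' → ¬ b' < a + 1

/-- Three points of `A` at mutual distance greater than `y`, two of which come within distance `y`
under `x ↦ d x`. -/
def Collapses (d : ℕ) (y : ℝ) (A : Set Circle1) : Prop :=
  ∃ a ∈ A, ∃ b ∈ A, ∃ c ∈ A, y < dist a b ∧ y < dist a c ∧ y < dist b c ∧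
    dist (md d a) (md d b) ≤ y

/-- A normalized lift to `ℝ` of the points in `Collapses`: `d (b - a)` is within `y` of the
integer `j`. -/
structure IsCollapsingTriple (d : ℕ) (y : ℝ) (A : Set Circle1) (a b c : ℝ) (j : ℤ) : Prop where
  left_mem : ↑a ∈ A
  right_mem : ↑b ∈ A
  third_mem : ↑c ∈ A
  left_mem_Ico : a ∈ Ico 0 1
  right_mem_Ioo : b ∈ Ioo a (a + 1)
  third_mem_Ioo : c ∈ Ioo (a + y) (b - y) ∪ Ioo (b + y) (a + 1 - y)
  int_mem_Ico : j ∈ Ico 1 (d : ℤ)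
  abs_le : |d * (b - a) - j| ≤ y

theorem dist_coe_circle (a b : ℝ) : dist (a : Circle1) b = |a - b - round (a - b)| := by
  rw [dist_eq_norm, ← AddCircle.coe_sub, UnitAddCircle.norm_eq]

theorem dist_coe_circle_le_abs (a b : ℝ) : dist (a : Circle1) b ≤ |a - b| := by
  rw [dist_eq_norm, ← AddCircle.coe_sub]
  exact QuotientAddGroup.norm_mk_le_norm

theorem dist_coe_circle_eq_abs {a b : ℝ} (hab : 2 * |a - b| ≤ 1) :
    dist (a : Circle1) b = |a - b| := by
  rw [dist_eq_norm, ← AddCircle.coe_sub, AddCircle.norm_coe_eq_abs_iff 1 one_ne_zero, abs_one]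
  linarith

theorem exists_coe_mem_Ico (a : ℝ) (b : Circle1) : ∃ b' ∈ Ico a (a + 1), (b' : Circle1) = b :=
  ⟨_, (AddCircle.equivIco 1 a b).2, (AddCircle.equivIco 1 a).symm_apply_apply b⟩

theorem exists_coe_mem_Ioo_of_lt_dist {y a : ℝ} {b : Circle1} (hab : y < dist (a : Circle1) b) :
    ∃ b' ∈ Ioo (a + y) (a + 1 - y), (b' : Circle1) = b := by
  obtain ⟨b', hb', rfl⟩ := exists_coe_mem_Ico a b
  have hleft := hab.trans_le (dist_coe_circle_le_abs a b')
  have hright : y < |a + 1 - b'| := by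
    refine hab.trans_le ?_
    have : ((a + 1 : ℝ) : Circle1) = a := by simp
    simpa only [this] using dist_coe_circle_le_abs (a + 1) b'
  rw [abs_sub_comm, abs_of_nonneg (by linarith [hb'.1])] at hleft
  rw [abs_of_pos (by linarith [hb'.2])] at hright
  exact ⟨b', ⟨by linarith, by linarith⟩, rfl⟩

theorem exists_lifts_of_lt_dist {y : ℝ} {a b c : Circle1} (hab : y < dist a b)
    (hac : y < dist a c) (hbc : y < dist b c) :
    ∃ a' b' c' : ℝ, (a' : Circle1) = a ∧ (b' : Circle1) = b ∧ (c' : Circle1) = c ∧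
      a' ∈ Ico 0 1 ∧ b' ∈ Ioo (a' + y) (a' + 1 - y) ∧
      c' ∈ Ioo (a' + y) (b' - y) ∪ Ioo (b' + y) (a' + 1 - y) := by
  obtain ⟨a', ha', rfl⟩ := exists_coe_mem_Ico 0 a
  obtain ⟨b', hb', rfl⟩ := exists_coe_mem_Ioo_of_lt_dist hab
  obtain ⟨c', hc', rfl⟩ := exists_coe_mem_Ioo_of_lt_dist hac
  rw [zero_add] at ha'
  refine ⟨a', b', c', rfl, rfl, rfl, ha', hb', ?_⟩
  rcases lt_abs.1 (hbc.trans_le (dist_coe_circle_le_abs b' c')) with hlt | hlt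
  · exact Or.inl ⟨hc'.1, by linarith⟩
  · exact Or.inr ⟨by linarith, hc'.2⟩

theorem Collapses.exists_isCollapsingTriple {d : ℕ} {y : ℝ} {A : Set Circle1} (hd : 2 ≤ d)
    (hy : 0 < y) (h : Collapses d y A) : ∃ a b c j, IsCollapsingTriple d y A a b c j := by
  obtain ⟨a, ha, b, hb, c, hc, hab, hac, hbc, hclose⟩ := h
  obtain ⟨a, b, c, rfl, rfl, rfl, ha', hb', hc'⟩ := exists_lifts_of_lt_dist hab hac hbc
  have hd' : (2 : ℝ) ≤ d := by exact_mod_cast hd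
  rw [md_coe, md_coe, dist_comm, dist_coe_circle, ← mul_sub] at hclose
  set j := round (d * (b - a))
  obtain ⟨hj, hj'⟩ := abs_le.1 hclose
  have hlower : d * y < d * (b - a) := mul_lt_mul_of_pos_left (by linarith [hb'.1]) (by linarith)
  have hupper : d * (b - a) < d * (1 - y) :=
    mul_lt_mul_of_pos_left (by linarith [hb'.2]) (by linarith)
  have hdy : 2 * y ≤ d * y := mul_le_mul_of_nonneg_right hd' hy.le
  have hj0 : (0 : ℝ) < j := by linarith
  have hjd : (j : ℝ) < (d : ℤ) := by
    push_cast
    linarith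
  exact ⟨a, b, c, j, ha, hb, hc, ha', ⟨by linarith [hb'.1], by linarith [hb'.2]⟩, hc',
    ⟨Int.cast_pos.1 hj0, Int.cast_lt.1 hjd⟩, hclose⟩

theorem exists_lt_lt_of_two_lt_card {α β : Type*} [LinearOrder β] {F : Finset α} {f : α → β}
    (hf : InjOn f F) (hF : 2 < F.card) :
    ∃ x ∈ F, ∃ y ∈ F, ∃ z ∈ F, f x < f y ∧ f y < f z := by
  classical
  rw [← Finset.card_image_of_injOn hf] at hF
  let g := (F.image f).orderEmbOfCardLe hF
  have hg : ∀ i, ∃ x ∈ F, f x = g i := fun i =>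
    Finset.mem_image.1 (Finset.orderEmbOfCardLe_mem _ hF i)
  choose x hxF hx using hg
  refine ⟨x 0, hxF 0, x 1, hxF 1, x 2, hxF 2, ?_, ?_⟩ <;>
    · rw [hx, hx, g.lt_iff_lt]
      decide

/-- `A` contains at least `N` points at mutual distance greater than `y`. -/
def HasSeparated {X : Type*} [PseudoMetricSpace X] (A : Set X) (y : ℝ) (N : ℕ) : Prop :=
  ∃ F : Finset X, N ≤ F.card ∧ ↑F ⊆ A ∧ (F : Set X).Pairwise (y < dist · ·)

theorem HasSeparated.mono {X : Type*} [PseudoMetricSpace X] {A B : Set X} {y : ℝ} {M N : ℕ}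
    (hNM : N ≤ M) (hAB : A ⊆ B) (h : HasSeparated A y M) : HasSeparated B y N := by
  obtain ⟨F, hcard, hF, hsep⟩ := h
  exact ⟨F, hNM.trans hcard, hF.trans hAB, hsep⟩

theorem hasSeparated_image {X Y : Type*} [PseudoMetricSpace Y] {f : X → Y} {A : Set X}
    {y : ℝ} (hy : 0 ≤ y) {F : Finset X} (hF : ↑F ⊆ A)
    (hsep : (F : Set X).Pairwise fun a b => y < dist (f a) (f b)) :
    HasSeparated (f '' A) y F.card := by
  classical
  have hinj : InjOn f F := fun a ha b hb hab => by
    by_contra hne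
    have : y < dist (f a) (f b) := hsep ha hb hne
    rw [hab, dist_self] at this
    exact hy.not_gt this
  refine ⟨F.image f, (Finset.card_image_of_injOn hinj).ge, ?_, ?_⟩
  · rw [Finset.coe_image]
    exact image_mono hF
  · rw [Finset.coe_image, hinj.pairwise_image]
    exact hsep

theorem exists_hasSeparated_of_infinite {X : Type*} [MetricSpace X] {A : Set X}
    (hA : A.Infinite) (N : ℕ) {δ : ℝ} (hδ : 0 < δ) : ∃ y ∈ Ioo 0 δ, HasSeparated A y N := by
  obtain ⟨F, hF, rfl⟩ := hA.exists_subset_card_eq N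
  have hsep : ∀ᶠ y in nhdsWithin (0 : ℝ) (Ioi 0), ∀ a ∈ F, ∀ b ∈ F, a ≠ b → y < dist a b := by
    simp only [Filter.eventually_all_finset, Filter.eventually_imp_distrib_left]
    exact fun a _ b _ hab =>
      Filter.mem_of_superset (Ioo_mem_nhdsGT (dist_pos.2 hab)) fun y hy => hy.2
  obtain ⟨y, hy, hyδ⟩ := (hsep.and (Ioo_mem_nhdsGT hδ)).exists
  exact ⟨y, hyδ, F, le_rfl, hF, fun a ha b hb hab => hy a ha b hb hab⟩

theorem HasSeparated.image_md_of_not_collapses {d : ℕ} {y : ℝ} {A : Set Circle1} {N : ℕ}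
    (hy : 0 ≤ y) (hN : 3 ≤ N) (hA : ¬ Collapses d y A) (h : HasSeparated A y N) :
    HasSeparated (md d '' A) y N := by
  classical
  obtain ⟨F, hcard, hF, hsep⟩ := h
  refine (hasSeparated_image hy hF fun a ha b hb hab => ?_).mono hcard Subset.rfl
  obtain ⟨c, hc, hcab⟩ : ∃ c ∈ F, c ∉ ({a, b} : Finset Circle1) :=
    Finset.exists_mem_notMem_of_card_lt_card
      (Finset.card_le_two.trans_lt (hN.trans hcard))
  simp only [Finset.mem_insert, Finset.mem_singleton, not_or] at hcab
  by_contra! hclose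
  exact hA ⟨a, hF ha, b, hF hb, c, hF hc, hsep ha hb hab, hsep ha hc (Ne.symm hcab.1),
    hsep hb hc (Ne.symm hcab.2), hclose⟩

theorem lt_dist_md_of_floor_eq {d : ℕ} {y x x' : ℝ} (hd : 0 < d)
    (hfloor : ⌊2 * d * x⌋ = ⌊2 * d * x'⌋) (hdist : y < dist (x : Circle1) x') :
    y < dist (md d x) (md d x') := by
  have hd' : (1 : ℝ) ≤ d := Nat.one_le_cast.2 hd
  have hlt := Int.abs_sub_lt_one_of_floor_eq_floor hfloor
  rw [← mul_sub, mul_assoc, abs_mul, abs_two, mul_sub] at hlt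
  rw [md_coe, md_coe, dist_coe_circle_eq_abs hlt.le, ← mul_sub, abs_mul, Nat.abs_cast]
  exact (hdist.trans_le (dist_coe_circle_le_abs x x')).trans_le
    (le_mul_of_one_le_left (abs_nonneg _) hd')

-- Pigeonhole: the circle is a union of `2 * d` arcs on which `x ↦ d x` expands distances.
theorem HasSeparated.image_md {d : ℕ} {y : ℝ} {A : Set Circle1} {N : ℕ} (hd : 0 < d) (hy : 0 ≤ y)
    (h : HasSeparated A y (2 * d * N)) : HasSeparated (md d '' A) y N := by
  classical
  obtain ⟨F, hcard, hF, hsep⟩ := h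
  choose lift hlift hcoe using exists_coe_mem_Ico 0
  have hmaps : ∀ a ∈ F, ⌊2 * d * lift a⌋ ∈ Finset.Ico (0 : ℤ) (2 * d : ℕ) := fun a _ => by
    have hd' : (0 : ℝ) < 2 * d := by positivity
    rw [Finset.mem_Ico, Int.floor_lt]
    refine ⟨Int.floor_nonneg.2 (mul_nonneg hd'.le (hlift a).1), ?_⟩
    push_cast
    exact mul_lt_of_lt_one_right hd' (by linarith [(hlift a).2])
  obtain ⟨k, -, hk⟩ := Finset.exists_le_card_fiber_of_mul_le_card_of_maps_to hmaps (n := N)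
    ⟨0, by simpa using hd⟩ (by rwa [Int.card_Ico, sub_zero, Int.toNat_natCast])
  refine (hasSeparated_image hy ((Finset.coe_subset.2 (Finset.filter_subset _ F)).trans hF)
    fun a ha b hb hab => ?_).mono hk Subset.rfl
  obtain ⟨haF, hak⟩ := Finset.mem_filter.1 ha
  obtain ⟨hbF, hbk⟩ := Finset.mem_filter.1 hb
  have hlt := hsep haF hbF hab
  rw [← hcoe a, ← hcoe b] at hlt ⊢
  exact lt_dist_md_of_floor_eq hd (hak.trans hbk.symm) hlt

theorem HasSeparated.exists_lt_lt_lt {y : ℝ} {A : Set Circle1} (h : HasSeparated A y 3) :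
    ∃ a b c : ℝ, ↑a ∈ A ∧ ↑b ∈ A ∧ ↑c ∈ A ∧
      a ∈ Ico 0 1 ∧ a + y < b ∧ b + y < c ∧ c + y < a + 1 := by
  obtain ⟨F, hcard, hF, hsep⟩ := h
  obtain ⟨a, ha, b, hb, c, hc, hab, hac, hbc⟩ := Finset.two_lt_card.1 hcard
  obtain ⟨a, b, c, rfl, rfl, rfl, ha', hb', hc' | hc'⟩ :=
    exists_lifts_of_lt_dist (hsep ha hb hab) (hsep ha hc hac) (hsep hb hc hbc)
  · exact ⟨a, c, b, hF ha, hF hc, hF hb, ha', hc'.1, by linarith [hc'.2], by linarith [hb'.2]⟩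
  · exact ⟨a, b, c, hF ha, hF hb, hF hc, ha', hb'.1, hc'.1, by linarith [hc'.2]⟩

namespace IsWandering

variable {d : ℕ} {y : ℝ} {T : ℕ → Set Circle1} {n₁ n₂ n₃ : ℕ}
  {a₁ b₁ c₁ a₂ b₂ c₂ a₃ b₃ c₃ : ℝ} {j : ℤ} (hT : IsWandering d T)
include hT

theorem false_of_mem {n n' : ℕ} (hne : n ≠ n') {x : Circle1} (hx : x ∈ T n) (hx' : x ∈ T n') :
    False :=
  (hT.pairwise_disjoint hne).notMem_of_mem_left hx hx'

theorem right_lt_right_of_isCollapsingTriple (hd : 2 ≤ d) (hy : 8 * (d * y) ≤ 1) (hne : n₁ ≠ n₂)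
    (h₁ : IsCollapsingTriple d y (T n₁) a₁ b₁ c₁ j) (h₂ : IsCollapsingTriple d y (T n₂) a₂ b₂ c₂ j)
    (hlt : a₁ < a₂) (hclose : 4 * (d * (a₂ - a₁)) < 1) : b₂ < b₁ := by
  have hd' : (2 : ℝ) ≤ d := by exact_mod_cast hd
  have hy0 : 0 ≤ y := (abs_nonneg _).trans h₁.abs_le
  have hdy : 2 * y ≤ d * y := mul_le_mul_of_nonneg_right hd' hy0
  have hj : (1 : ℝ) ≤ j := by exact_mod_cast h₁.int_mem_Ico.1
  have hjd : (j : ℝ) + 1 ≤ d := by exact_mod_cast h₁.int_mem_Ico.2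
  obtain ⟨hb₁, -⟩ := abs_le.1 h₁.abs_le
  obtain ⟨-, hb₂⟩ := abs_le.1 h₂.abs_le
  have ha₂b₁ : a₂ < b₁ := lt_of_mul_lt_mul_left (a := (d : ℝ)) (by linarith) (by linarith)
  have hb₂a₁ : b₂ < a₁ + 1 := lt_of_mul_lt_mul_left (a := (d : ℝ)) (by linarith) (by linarith)
  refine lt_of_le_of_ne (not_lt.1 fun hb => ?_) fun heq => ?_
  · exact hT.not_crossing hne h₁.left_mem h₁.right_mem h₂.left_mem h₂.right_mem hlt ha₂b₁ hb hb₂a₁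
  · exact hT.false_of_mem hne h₁.right_mem (heq ▸ h₂.right_mem)

-- The three leaves `(aᵢ, bᵢ)` are nested, and the strip between the outer and the inner one is too
-- thin to contain `c₂`.
theorem not_isCollapsingTriple_of_close (hd : 2 ≤ d) (hy : 8 * (d * y) ≤ 1) (h₁₂ : n₁ ≠ n₂)
    (h₂₃ : n₂ ≠ n₃) (h₁ : IsCollapsingTriple d y (T n₁) a₁ b₁ c₁ j)
    (h₂ : IsCollapsingTriple d y (T n₂) a₂ b₂ c₂ j) (hlt₁₂ : a₁ < a₂) (hlt₂₃ : a₂ < a₃)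
    (hclose : 4 * (d * (a₃ - a₁)) < 1) : ¬ IsCollapsingTriple d y (T n₃) a₃ b₃ c₃ j := by
  intro h₃
  have hd' : (0 : ℝ) < d := by exact_mod_cast two_pos.trans_le hd
  have hda₁₂ := mul_lt_mul_of_pos_left hlt₁₂ hd'
  have hda₂₃ := mul_lt_mul_of_pos_left hlt₂₃ hd'
  have hb₂₁ := hT.right_lt_right_of_isCollapsingTriple hd hy h₁₂ h₁ h₂ hlt₁₂ (by linarith)
  have hb₃₂ := hT.right_lt_right_of_isCollapsingTriple hd hy h₂₃ h₂ h₃ hlt₂₃ (by linarith)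
  have hthin : a₃ - a₁ + (b₁ - b₃) ≤ 2 * y / d := by
    rw [le_div_iff₀ hd']
    linarith [(abs_le.1 h₁.abs_le).2, (abs_le.1 h₃.abs_le).1]
  have hy0 : 0 ≤ y := (abs_nonneg _).trans h₁.abs_le
  have hthin' : a₃ - a₁ + (b₁ - b₃) ≤ y := hthin.trans <| by
    rw [div_le_iff₀ hd', mul_comm y]
    exact mul_le_mul_of_nonneg_right (by exact_mod_cast hd) hy0
  rcases h₂.third_mem_Ioo with hc₂ | hc₂
  · exact hT.not_crossing h₂₃.symm h₃.left_mem h₃.right_mem h₂.third_mem h₂.right_mem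
      (by linarith [hc₂.1]) (by linarith [hc₂.2]) hb₃₂ (by linarith [h₂.right_mem_Ioo.2])
  · exact hT.not_crossing h₁₂ h₁.left_mem h₁.right_mem h₂.left_mem h₂.third_mem hlt₁₂
      (by linarith [h₂.right_mem_Ioo.1]) (by linarith [hc₂.1]) (by linarith [hc₂.2])

theorem card_le_of_collapses (hd : 2 ≤ d) (hy0 : 0 < y) (hy : 8 * (d * y) ≤ 1) {F : Finset ℕ}
    (hF : ∀ n ∈ F, Collapses d y (T n)) : F.card ≤ d * (4 * d) * 2 := by
  have hd' : (0 : ℝ) < d := by exact_mod_cast two_pos.trans_le hd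
  have htriple : ∀ n ∈ F, ∃ a b c j, IsCollapsingTriple d y (T n) a b c j := fun n hn =>
    (hF n hn).exists_isCollapsingTriple hd hy0
  choose! a b c j htriple using htriple
  by_contra! hcard
  have hmaps : ∀ n ∈ F, (j n, ⌊4 * (d * a n)⌋) ∈
      Finset.Ico (0 : ℤ) d ×ˢ Finset.Ico (0 : ℤ) (4 * d : ℕ) := fun n hn => by
    obtain ⟨ha, ha'⟩ := (htriple n hn).left_mem_Ico
    obtain ⟨hj, hj'⟩ := (htriple n hn).int_mem_Ico
    rw [Finset.mem_product, Finset.mem_Ico, Finset.mem_Ico, Int.floor_lt]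
    refine ⟨⟨zero_le_one.trans hj, hj'⟩, Int.floor_nonneg.2 (by positivity), ?_⟩
    push_cast
    linarith [mul_lt_of_lt_one_right hd' ha']
  have hinj : InjOn a F := fun n hn n' hn' heq => by
    by_contra hne
    exact hT.false_of_mem hne (htriple n hn).left_mem (heq ▸ (htriple n' hn').left_mem)
  obtain ⟨⟨k, l⟩, -, hkl⟩ := Finset.exists_lt_card_fiber_of_mul_lt_card_of_maps_to hmaps (n := 2)
    (by rwa [Finset.card_product, Int.card_Ico, Int.card_Ico, sub_zero, sub_zero,
      Int.toNat_natCast, Int.toNat_natCast])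
  obtain ⟨n₁, h₁, n₂, h₂, n₃, h₃, hlt₁₂, hlt₂₃⟩ :=
    exists_lt_lt_of_two_lt_card (hinj.mono (Finset.coe_subset.2 (Finset.filter_subset _ F))) hkl
  simp only [Finset.mem_filter, Prod.mk.injEq] at h₁ h₂ h₃
  obtain ⟨h₁, rfl, hl₁⟩ := h₁
  obtain ⟨h₂, hj₂, -⟩ := h₂
  obtain ⟨h₃, hj₃, hl₃⟩ := h₃
  have hclose := Int.abs_sub_lt_one_of_floor_eq_floor (hl₃.trans hl₁.symm)
  exact hT.not_isCollapsingTriple_of_close hd hy (ne_of_apply_ne a hlt₁₂.ne)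
    (ne_of_apply_ne a hlt₂₃.ne) (htriple n₁ h₁) (hj₂ ▸ htriple n₂ h₂) hlt₁₂ hlt₂₃
    (by linarith [(abs_lt.1 hclose).2]) (hj₃ ▸ htriple n₃ h₃)

theorem hasSeparated_three (hd : 2 ≤ d) (hy0 : 0 < y) (hy : 8 * (d * y) ≤ 1)
    (h0 : HasSeparated (T 0) y ((2 * d) ^ (d * (4 * d) * 2) * 3)) (n : ℕ) :
    HasSeparated (T n) y 3 := by
  classical
  set M := d * (4 * d) * 2
  have hcount : ∀ n, Nat.count (fun n => Collapses d y (T n)) n ≤ M := fun n => by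
    rw [Nat.count_eq_card_filter_range]
    exact hT.card_le_of_collapses hd hy0 hy fun k hk => (Finset.mem_filter.1 hk).2
  have hpow : ∀ k, 3 ≤ (2 * d) ^ k * 3 := fun k =>
    Nat.le_mul_of_pos_left 3 (pow_pos (by positivity) k)
  suffices hsep : HasSeparated (T n) y
      ((2 * d) ^ (M - Nat.count (fun n => Collapses d y (T n)) n) * 3) from
    hsep.mono (hpow _) Subset.rfl
  induction n with
  | zero => simpa using h0
  | succ n ih =>
    have hbound := hcount (n + 1)
    rw [Nat.count_succ] at hbound ⊢
    refine .mono le_rfl (hT.mapsTo n).image_subset ?_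
    split_ifs at hbound ⊢ with hcollapse
    · refine .image_md (two_pos.trans_le hd) hy0.le ?_
      rwa [← mul_assoc, ← pow_succ', Nat.sub_add_eq,
        Nat.sub_add_cancel (Nat.le_sub_of_add_le' hbound)]
    · exact ih.image_md_of_not_collapses hy0.le (hpow _) hcollapse

-- Two of the triples would have nearly equal first and third points, hence be linked.
theorem not_forall_hasSeparated_three (hy : 0 < y) : ¬ ∀ n, HasSeparated (T n) y 3 := by
  intro hsep
  choose a b c ha hb hc ha' hab hbc hca using fun n => (hsep n).exists_lt_lt_lt
  have hbdd : (fun n => (a n, c n)) '' univ ⊆ Icc 0 2 ×ˢ Icc 0 2 := by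
    rintro _ ⟨n, -, rfl⟩
    obtain ⟨ha0, ha1⟩ := ha' n
    exact ⟨⟨ha0, by linarith⟩, ⟨by linarith [hab n, hbc n], by linarith [hca n]⟩⟩
  obtain ⟨n, -, n', -, hne, hdist⟩ := exists_ne_dist_lt_of_infinite infinite_univ
    ((isCompact_Icc.prod isCompact_Icc).totallyBounded.subset hbdd) hy
  rw [Prod.dist_eq, max_lt_iff, Real.dist_eq, Real.dist_eq, abs_lt, abs_lt] at hdist
  obtain ⟨⟨hda, hda'⟩, ⟨hdc, hdc'⟩⟩ := hdist
  rcases lt_trichotomy (a n) (a n') with hlt | heq | hlt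
  · exact hT.not_crossing hne (ha n) (hb n) (ha n') (hc n') hlt (by linarith [hab n])
      (by linarith [hbc n]) (by linarith [hca n])
  · exact hT.false_of_mem hne (ha n) (heq ▸ ha n')
  · exact hT.not_crossing hne.symm (ha n') (hb n') (ha n) (hc n) hlt (by linarith [hab n'])
      (by linarith [hbc n']) (by linarith [hca n'])

theorem finite_zero (hd : 2 ≤ d) : (T 0).Finite := by
  by_contra hinf
  have hd' : (0 : ℝ) < 8 * d := mul_pos (by norm_num) (Nat.cast_pos.2 (two_pos.trans_le hd))
  obtain ⟨y, ⟨hy0, hy⟩, hsep⟩ :=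
    exists_hasSeparated_of_infinite hinf ((2 * d) ^ (d * (4 * d) * 2) * 3) (one_div_pos.2 hd')
  rw [lt_div_iff₀ hd'] at hy
  exact hT.not_forall_hasSeparated_three hy0
    (hT.hasSeparated_three hd hy0 (by linarith) hsep)

end IsWandering

/-! ### Maps that almost respect an equivalence relation -/

/-- `S` is the intersection of `A` with a union of classes of `G`. -/
structure IsSaturatedIn {X : Type*} (G : Setoid X) (A S : Set X) : Prop where
  subset : S ⊆ A
  mem_of_rel : ∀ {x v}, x ∈ S → v ∈ A → G x v → v ∈ S

/-- The map `f` is onto from each class of `G` to a union of classes, and a class of `G` is mapped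
into a single class unless all the classes that its image meets contain a point of `E`. -/
structure IsAlmostClassMap {X : Type*} (f : X → X) (G : Setoid X) (A E : Set X) : Prop where
  preimage_eq : f ⁻¹' A = A
  mapsTo : MapsTo f E E
  exists_rel : ∀ {t v}, G (f t) v → ∃ u, G t u ∧ f u = v
  exists_rel_of_split : ∀ {t u}, G t u → ¬ G (f t) (f u) → ∃ e ∈ E, G (f t) e

namespace IsAlmostClassMap

variable {X : Type*} {f : X → X} {G : Setoid X} {A E S : Set X}

theorem image_isSaturatedIn (h : IsAlmostClassMap f G A E) (hS : IsSaturatedIn G A S) :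
    IsSaturatedIn G A (f '' S) := by
  have hmem : ∀ {x}, f x ∈ A ↔ x ∈ A := fun {x} => Set.ext_iff.1 h.preimage_eq x
  refine ⟨image_subset_iff.2 fun x hx => hmem.2 (hS.subset hx), ?_⟩
  rintro _ v ⟨t, ht, rfl⟩ hv htv
  obtain ⟨u, htu, rfl⟩ := h.exists_rel htv
  exact ⟨u, hS.mem_of_rel ht (hmem.1 hv) htu, rfl⟩

theorem iterate_image_isSaturatedIn (h : IsAlmostClassMap f G A E) (hS : IsSaturatedIn G A S)
    (n : ℕ) : IsSaturatedIn G A (f^[n] '' S) := by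
  induction n with
  | zero => rwa [iterate_zero, image_id]
  | succ n ih =>
    rw [iterate_succ', image_comp]
    exact h.image_isSaturatedIn ih

theorem exists_rel_apply (h : IsAlmostClassMap f G A E) {x : X} (hx : ∃ e ∈ E, G x e) :
    ∃ e ∈ E, G (f x) e := by
  obtain ⟨e, he, hxe⟩ := hx
  by_cases hfe : G (f x) (f e)
  · exact ⟨f e, h.mapsTo he, hfe⟩
  · exact h.exists_rel_of_split hxe hfe

theorem exists_rel_iterate (h : IsAlmostClassMap f G A E) {x : X} (hx : ∃ e ∈ E, G x e) (n : ℕ) :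
    ∃ e ∈ E, G (f^[n] x) e := by
  induction n with
  | zero => exact hx
  | succ n ih =>
    rw [iterate_succ_apply']
    exact h.exists_rel_apply ih

-- A saturated set all of whose classes meet `E` is determined by the points of `E` related to it.
theorem exists_ne_image_iterate_eq_of_forall_exists_rel (h : IsAlmostClassMap f G A E)
    (hE : E.Finite) (hS : IsSaturatedIn G A S) (hSE : ∀ x ∈ S, ∃ e ∈ E, G x e) :
    ∃ n n', n ≠ n' ∧ f^[n] '' S = f^[n'] '' S := by
  let trace (n : ℕ) : Set X := {e ∈ E | ∃ x ∈ f^[n] '' S, G x e}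
  obtain ⟨n, -, n', -, hne, heq⟩ := infinite_univ.exists_ne_map_eq_of_mapsTo (f := trace)
    (fun n _ => sep_subset E _) hE.finite_subsets
  have subset_of_trace_eq : ∀ {n n'}, trace n = trace n' → f^[n] '' S ⊆ f^[n'] '' S := by
    rintro n n' heq _ ⟨x, hx, rfl⟩
    obtain ⟨e, he, hxe⟩ := h.exists_rel_iterate (hSE x hx) n
    obtain ⟨-, y, hy, hye⟩ : e ∈ trace n' := heq ▸ ⟨he, _, mem_image_of_mem _ hx, hxe⟩
    exact (h.iterate_image_isSaturatedIn hS n').mem_of_rel hy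
      ((h.iterate_image_isSaturatedIn hS n).subset (mem_image_of_mem _ hx))
      (G.trans hye (G.symm hxe))
  exact ⟨n, n', hne, (subset_of_trace_eq heq).antisymm (subset_of_trace_eq heq.symm)⟩

theorem exists_rel_of_mem_image (h : IsAlmostClassMap f G A E)
    (hS : ∀ x ∈ S, ∀ y ∈ S, G x y) {x y : X} (hx : x ∈ f '' S) (hy : y ∈ f '' S) (hxy : ¬ G x y) :
    ∀ z ∈ f '' S, ∃ e ∈ E, G z e := by
  rintro _ ⟨z, hz, rfl⟩
  obtain ⟨x, hx, rfl⟩ := hx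
  obtain ⟨y, hy, rfl⟩ := hy
  by_cases hzx : G (f z) (f x)
  · exact h.exists_rel_of_split (hS z hz y hy) fun hzy => hxy (G.trans (G.symm hzx) hzy)
  · exact h.exists_rel_of_split (hS z hz x hx) hzx

theorem exists_ne_image_iterate_eq_of_not_rel (h : IsAlmostClassMap f G A E) (hE : E.Finite)
    (hS : IsSaturatedIn G A S) (hSG : ∀ x ∈ S, ∀ y ∈ S, G x y) {n : ℕ} {x y : X}
    (hx : x ∈ f^[n] '' S) (hy : y ∈ f^[n] '' S) (hxy : ¬ G x y) :
    ∃ n n', n ≠ n' ∧ f^[n] '' S = f^[n'] '' S := by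
  induction n generalizing x y with
  | zero =>
    rw [iterate_zero, image_id] at hx hy
    exact absurd (hSG x hx y hy) hxy
  | succ n ih =>
    by_cases hn : ∀ x ∈ f^[n] '' S, ∀ y ∈ f^[n] '' S, G x y
    · have hsat := h.iterate_image_isSaturatedIn hS (n + 1)
      rw [iterate_succ', image_comp] at hx hy hsat
      obtain ⟨k, k', hne, heq⟩ := h.exists_ne_image_iterate_eq_of_forall_exists_rel hE hsat
        (h.exists_rel_of_mem_image hn hx hy hxy)
      refine ⟨k.succ + n, k'.succ + n, by lia, ?_⟩
      simpa only [iterate_add, iterate_succ, image_comp] using heq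
    · push Not at hn
      obtain ⟨x, hx, y, hy, hxy⟩ := hn
      exact ih hx hy hxy

theorem pairwise_disjoint_image_iterate (h : IsAlmostClassMap f G A E) (hS : IsSaturatedIn G A S)
    (hSG : ∀ n, ∀ x ∈ f^[n] '' S, ∀ y ∈ f^[n] '' S, G x y)
    (hne : ∀ n n', n ≠ n' → f^[n] '' S ≠ f^[n'] '' S) :
    Pairwise (Disjoint on fun n => f^[n] '' S) := by
  have hsat := h.iterate_image_isSaturatedIn hS
  have subset_of_mem : ∀ {n n' x}, x ∈ f^[n] '' S → x ∈ f^[n'] '' S → f^[n] '' S ⊆ f^[n'] '' S :=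
    fun {n n' x} hx hx' y hy => (hsat n').mem_of_rel hx' ((hsat n).subset hy) (hSG n x hx y hy)
  intro n n' hnn'
  refine disjoint_left.2 fun x hx hx' => hne n n' hnn' ?_
  exact (subset_of_mem hx hx').antisymm (subset_of_mem hx' hx)

end IsAlmostClassMap

/-! ### Laminations of the circle -/

theorem coe_mem_ratC_iff {x : ℝ} : (x : Circle1) ∈ ratC ↔ ∃ q : ℚ, (q : ℝ) = x := by
  constructor
  · rintro ⟨q, hq⟩
    obtain ⟨n, hn⟩ := coe_circle_eq_iff.1 hq
    exact ⟨q - n, by push_cast; linarith⟩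
  · rintro ⟨q, rfl⟩
    exact ⟨q, rfl⟩

theorem md_mem_ratC_iff {d : ℕ} (hd : 0 < d) {x : Circle1} : md d x ∈ ratC ↔ x ∈ ratC := by
  obtain ⟨x, rfl⟩ := QuotientAddGroup.mk_surjective x
  have hd' : (d : ℝ) ≠ 0 := Nat.cast_ne_zero.2 hd.ne'
  rw [md_coe, coe_mem_ratC_iff, coe_mem_ratC_iff]
  constructor
  · rintro ⟨q, hq⟩
    exact ⟨q / d, by push_cast; rw [hq, mul_div_cancel_left₀ x hd']⟩
  · rintro ⟨q, rfl⟩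
    exact ⟨d * q, by push_cast; rfl⟩

theorem finite_coe_preimage_inter_Icc (c : Circle1) (a b : ℝ) :
    ((fun y : ℝ => (y : Circle1)) ⁻¹' {c} ∩ Icc a b).Finite := by
  obtain ⟨z, rfl⟩ := QuotientAddGroup.mk_surjective c
  refine ((finite_Icc ⌈a - z⌉ ⌊b - z⌋).image fun n : ℤ => z + n).subset ?_
  rintro y ⟨hy, hay, hyb⟩
  obtain ⟨n, rfl⟩ := coe_circle_eq_iff.1 (Eq.symm hy)
  exact ⟨n, ⟨Int.ceil_le.2 (by linarith), Int.le_floor.2 (by linarith)⟩, rfl⟩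

-- The points `p` and `q` separate the circle into the arcs `(p, q)` and `(q, p + 1)`.
theorem coe_notMem_of_isPreconnected {C : Set Circle1} (hC : IsPreconnected C) {p q x y : ℝ}
    (hp : ↑p ∉ C) (hq : ↑q ∉ C) (hx : x ∈ Ioo p q) (hy : y ∈ Ioo q (p + 1)) (hxC : ↑x ∈ C) :
    ↑y ∉ C := by
  intro hyC
  have isOpen_arc : ∀ a b : ℝ, IsOpen ((fun t : ℝ => (t : Circle1)) '' Ioo a b) := fun a b =>
    QuotientAddGroup.isOpenMap_coe _ isOpen_Ioo
  have hcover : C ⊆ (fun t : ℝ => (t : Circle1)) '' Ioo p q ∪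
      (fun t : ℝ => (t : Circle1)) '' Ioo q (p + 1) := by
    intro c hc
    obtain ⟨t, ⟨hpt, htp⟩, rfl⟩ := exists_coe_mem_Ico p c
    have hpt' : p < t := lt_of_le_of_ne hpt fun heq => hp (heq ▸ hc)
    rcases lt_trichotomy t q with htq | rfl | hqt
    · exact Or.inl ⟨t, ⟨hpt', htq⟩, rfl⟩
    · exact absurd hc hq
    · exact Or.inr ⟨t, ⟨hqt, htp⟩, rfl⟩
  obtain ⟨_, -, ⟨a, ha, rfl⟩, ⟨b, hb, hab⟩⟩ := hC _ _ (isOpen_arc p q) (isOpen_arc q (p + 1))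
    hcover ⟨x, hxC, x, hx, rfl⟩ ⟨y, hyC, y, hy, rfl⟩
  have hab' := (AddCircle.coe_eq_coe_iff_of_mem_Ico ⟨(hx.1.trans hx.2).le.trans hb.1.le, hb.2⟩
    ⟨ha.1.le, by linarith [ha.2, hy.1, hy.2]⟩).1 hab
  linarith [ha.2, hb.1]

/-- The lift to `ℝ` of a relation on `ℝ/ℤ`. -/
def liftRel (r : Circle1 → Circle1 → Prop) (x y : ℝ) : Prop := r x y

section ConnectedComponents

variable {r : Circle1 → Circle1 → Prop} {x t u : ℝ}

theorem coe_mem_connectedComponentIn_of_lastBefore_eq (h : IsLiftedLam (liftRel r))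
    (hx : liftRel r x x) (ht : ¬ liftRel r x t) (hu : ¬ liftRel r x u)
    (htu : lastBefore (liftRel r) x t = lastBefore (liftRel r) x u) :
    (u : Circle1) ∈ connectedComponentIn (relClass r x)ᶜ t := by
  have hsub : (fun c : ℝ => (c : Circle1)) '' uIcc t u ⊆ (relClass r x)ᶜ := by
    rintro _ ⟨c, hc, rfl⟩ (hxc : liftRel r x c)
    have hlast := h.lastBefore_lt hx
    rcases mem_uIcc.1 hc with ⟨htc, hcu⟩ | ⟨huc, hct⟩
    · have hcu' : c < u := lt_of_le_of_ne hcu fun heq => hu (heq ▸ hxc)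
      linarith [hlast t, le_lastBefore hxc hcu']
    · have hct' : c < t := lt_of_le_of_ne hct fun heq => ht (heq ▸ hxc)
      linarith [hlast u, le_lastBefore hxc hct']
  have hconn : IsPreconnected ((fun c : ℝ => (c : Circle1)) '' uIcc t u) :=
    isPreconnected_uIcc.image _ (AddCircle.continuous_mk' 1).continuousOn
  exact hconn.subset_connectedComponentIn ⟨t, left_mem_uIcc, rfl⟩ hsub ⟨u, right_mem_uIcc, rfl⟩

theorem lastBefore_eq_of_coe_mem_connectedComponentIn (h : IsLiftedLam (liftRel r))
    (hx : liftRel r x x) (ht : ¬ liftRel r x t)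
    (hu : u ∈ Ico (lastBefore (liftRel r) x t) (lastBefore (liftRel r) x t + 1))
    (hmem : (u : Circle1) ∈ connectedComponentIn (relClass r x)ᶜ t) :
    lastBefore (liftRel r) x t = lastBefore (liftRel r) x u := by
  set a := lastBefore (liftRel r) x t
  set b := lastBefore (liftRel r) x u
  have hxa : liftRel r x a := h.rel_lastBefore hx t
  have hxb : liftRel r x b := h.rel_lastBefore hx u
  have hsub := connectedComponentIn_subset (relClass r x)ᶜ t
  have hau : a < u := lt_of_le_of_ne hu.1 fun heq => hsub hmem (heq ▸ hxa)
  refine le_antisymm (le_lastBefore hxa hau) (not_lt.1 fun hab => ?_)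
  have htb : t < b := by
    refine lt_of_le_of_ne (not_lt.1 fun hbt => ?_) fun heq => ht (heq ▸ hxb)
    exact hab.not_ge (le_lastBefore hxb hbt)
  exact coe_notMem_of_isPreconnected isPreconnected_connectedComponentIn (fun ha => hsub ha hxa)
    (fun hb => hsub hb hxb) ⟨h.lastBefore_lt hx t, htb⟩ ⟨h.lastBefore_lt hx u, hu.2⟩
    (mem_connectedComponentIn ht) hmem

theorem coe_mem_connectedComponentIn_iff_sameSide (h : IsLiftedLam (liftRel r))
    (hx : liftRel r x x) (ht : ¬ liftRel r x t) (hu : ¬ liftRel r x u) :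
    (u : Circle1) ∈ connectedComponentIn (relClass r x)ᶜ t ↔ SameSide (liftRel r) x t u := by
  constructor
  · intro hmem
    obtain ⟨u', hu', heq⟩ := exists_coe_mem_Ico (lastBefore (liftRel r) x t) u
    refine .trans (congrArg _ ?_) (h.sameSide_of_coe_eq hx heq)
    exact lastBefore_eq_of_coe_mem_connectedComponentIn h hx ht hu' (heq ▸ hmem)
  · intro hside
    obtain ⟨n, hn⟩ := coe_circle_eq_iff.1 hside.symm
    rw [← coe_circle_add_int u n]
    refine coe_mem_connectedComponentIn_of_lastBefore_eq h hx ht (fun hun => hu ?_) ?_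
    · exact h.rel_of_coe_eq hun (coe_circle_add_int u n)
    · rw [h.lastBefore_add_int hx, hn]

end ConnectedComponents

/-- An equivalence relation on `ℚ/ℤ` with finite, pairwise unlinked classes such that `x ↦ d x` maps
classes onto classes: an invariant rational lamination without the conditions of closedness and of
preservation of consecutive points. -/
structure IsInvUnlinkedRel (d : ℕ) (r : Circle1 → Circle1 → Prop) : Prop where
  rel_rat : ∀ {x y}, r x y → x ∈ ratC
  refl : ∀ {x}, x ∈ ratC → r x x
  symm : ∀ {x y}, r x y → r y x
  trans : ∀ {x y z}, r x y → r y z → r x z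
  finite_relClass : ∀ x, (relClass r x).Finite
  unlinked : ∀ {x y}, ¬ r x y → Unlinked (relClass r x) (relClass r y)
  image_relClass : ∀ {x}, x ∈ ratC → md d '' relClass r x = relClass r (md d x)

theorem InvRatLam.isInvUnlinkedRel {d : ℕ} (lam : InvRatLam d) : IsInvUnlinkedRel d lam.rel where
  rel_rat h := (lam.rel_rat _ _ h).1
  refl := lam.refl _
  symm := lam.symm _ _
  trans := lam.trans _ _ _
  finite_relClass := lam.finiteClass
  unlinked := lam.unlinkedClass _ _
  image_relClass hx := (lam.invariant _ hx).1

/-- The relation of lying in the same gap of the lamination lifted to `R`, on `ℝ/ℤ`; it is read off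
from the lifts in `[0, 1)`. -/
def gapSetoid (R : ℝ → ℝ → Prop) : Setoid Circle1 where
  r x y := SameGap R (classSupport R) (AddCircle.equivIco 1 0 x) (AddCircle.equivIco 1 0 y)
  iseqv := ⟨fun _ _ _ => rfl, SameGap.symm, SameGap.trans⟩

theorem IsLiftedLam.gapSetoid_coe {R : ℝ → ℝ → Prop} (h : IsLiftedLam R) {t u : ℝ} :
    gapSetoid R t u ↔ SameGap R (classSupport R) t u := by
  have hlift : ∀ t : ℝ, SameGap R (classSupport R) t (AddCircle.equivIco 1 0 (t : Circle1)) :=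
    fun t => h.sameGap_of_coe_eq (fun _ hx => hx)
      ((AddCircle.equivIco 1 0).symm_apply_apply (t : Circle1)).symm
  exact ⟨fun htu => ((hlift t).trans htu).trans (hlift u).symm,
    fun htu => ((hlift t).symm.trans htu).trans (hlift u)⟩

namespace IsInvUnlinkedRel

variable {d : ℕ} {r : Circle1 → Circle1 → Prop} (h : IsInvUnlinkedRel d r)
include h

theorem rel_of_crossing {x x' y y' : ℝ} (hx : r x x') (hy : r y y') (hxy : x < y) (hyx' : y < x')
    (hx'y' : x' < y') (hy'x : y' < x + 1) : r x y := by
  by_contra hne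
  obtain ⟨c, -, hc⟩ := h.unlinked hne
  have hsub := connectedComponentIn_subset (relClass r x)ᶜ c
  exact coe_notMem_of_isPreconnected isPreconnected_connectedComponentIn
    (fun hmem => hsub hmem (h.refl (h.rel_rat hx))) (fun hmem => hsub hmem hx) ⟨hxy, hyx'⟩
    ⟨hx'y', hy'x⟩ (hc (h.refl (h.rel_rat hy))) (hc hy)

theorem isLiftedLam : IsLiftedLam (liftRel r) where
  symm := h.symm
  trans := h.trans
  add_int n hxy := by rwa [liftRel, coe_circle_add_int]
  finite_Icc x a b := by
    refine ((h.finite_relClass x).biUnion fun c _ => finite_coe_preimage_inter_Icc c a b).subset ?_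
    exact fun y hy => mem_biUnion hy.1 ⟨rfl, hy.2⟩
  rel_of_crossing := h.rel_of_crossing

theorem liftRel_self_iff {x : ℝ} : liftRel r x x ↔ (x : Circle1) ∈ ratC := ⟨h.rel_rat, h.refl⟩

theorem isLiftedInvLam (hd : 0 < d) : IsLiftedInvLam d (liftRel r) where
  toIsLiftedLam := h.isLiftedLam
  pos := hd
  rel_self_iff := h.liftRel_self_iff.trans coe_mem_ratC_iff
  mul {x y} hxy := by
    have hmem : md d y ∈ relClass r (md d x) :=
      h.image_relClass (h.rel_rat hxy) ▸ mem_image_of_mem _ hxy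
    rwa [md_coe, md_coe] at hmem
  exists_rel_of_mul {x y} hxy := by
    have hx : (x : Circle1) ∈ ratC := (md_mem_ratC_iff hd).1 (md_coe d x ▸ h.rel_rat hxy)
    have hy : ↑y ∈ relClass r (md d x) := by rwa [md_coe]
    rw [← h.image_relClass hx] at hy
    obtain ⟨w, hw, hwy⟩ := hy
    obtain ⟨w, rfl⟩ := QuotientAddGroup.mk_surjective w
    exact ⟨w, hw, (md_coe d w).symm.trans hwy⟩

theorem unlRel_iff {x y : Circle1} :
    UnlRel r x y ↔ x ∉ ratC ∧ y ∉ ratC ∧ gapSetoid (liftRel r) x y := by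
  refine and_congr_right fun hx => and_congr_right fun hy => ?_
  obtain ⟨t, rfl⟩ := QuotientAddGroup.mk_surjective x
  obtain ⟨u, rfl⟩ := QuotientAddGroup.mk_surjective y
  have hiff : ∀ z : ℝ, ↑z ∈ ratC → (_ ↔ SameSide (liftRel r) z t u) := fun z hz =>
    coe_mem_connectedComponentIn_iff_sameSide h.isLiftedLam (h.refl hz)
      (fun hzt => hx (h.rel_rat (h.symm hzt))) fun hzu => hy (h.rel_rat (h.symm hzu))
  constructor
  · rintro (heq | hcomp)
    · exact heq ▸ (gapSetoid (liftRel r)).refl t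
    · refine h.isLiftedLam.gapSetoid_coe.2 fun z hz => ?_
      have hz' := h.liftRel_self_iff.1 hz
      exact (hiff z hz').1 (hcomp z hz')
  · refine fun hgap => Or.inr fun z hz => ?_
    obtain ⟨z, rfl⟩ := QuotientAddGroup.mk_surjective z
    exact (hiff z hz).2 (h.isLiftedLam.gapSetoid_coe.1 hgap z (h.refl hz))

theorem exists_isAlmostClassMap (hd : 0 < d) :
    ∃ E : Set Circle1, E.Finite ∧ IsAlmostClassMap (md d) (gapSetoid (liftRel r)) ratCᶜ E := by
  have hlift := h.isLiftedInvLam hd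
  obtain ⟨E, hE, hmaps, hexc⟩ := hlift.exists_finite_mapsTo_isExceptional
  refine ⟨E, hE, Set.ext fun x => not_congr (md_mem_ratC_iff hd), hmaps, ?_, ?_⟩
  · intro t v htv
    obtain ⟨t, rfl⟩ := QuotientAddGroup.mk_surjective t
    obtain ⟨v, rfl⟩ := QuotientAddGroup.mk_surjective v
    obtain ⟨u, htu, huv⟩ :=
      hlift.exists_sameGap_of_mul (hlift.gapSetoid_coe.1 (md_coe d t ▸ htv))
    exact ⟨u, hlift.gapSetoid_coe.2 htu, (md_coe d u).trans huv⟩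
  · intro t u htu hsplit
    obtain ⟨t, rfl⟩ := QuotientAddGroup.mk_surjective t
    obtain ⟨u, rfl⟩ := QuotientAddGroup.mk_surjective u
    rw [md_coe, md_coe, hlift.gapSetoid_coe] at hsplit
    obtain ⟨e, he, hte⟩ := hlift.exists_isExceptional_of_split (hlift.gapSetoid_coe.1 htu) hsplit
    refine ⟨md d e, hmaps (hexc e he), ?_⟩
    rw [md_coe, md_coe]
    exact hlift.gapSetoid_coe.2 hte

theorem isWandering_iterate_image {S : Set Circle1}
    (hsat : ∀ n, IsSaturatedIn (gapSetoid (liftRel r)) ratCᶜ ((md d)^[n] '' S))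
    (hrel : ∀ n, ∀ x ∈ (md d)^[n] '' S, ∀ y ∈ (md d)^[n] '' S, gapSetoid (liftRel r) x y)
    (hdisj : Pairwise (Disjoint on fun n => (md d)^[n] '' S)) :
    IsWandering d fun n => (md d)^[n] '' S where
  mapsTo n := by
    rw [iterate_succ', image_comp]
    exact mapsTo_image _ _
  pairwise_disjoint := hdisj
  not_crossing {n n'} hne {a b a' b'} ha hb ha' hb' haa' ha'b hbb' hb'a := by
    have hgap : ∀ {t u : ℝ}, gapSetoid (liftRel r) t u ↔ _ := h.isLiftedLam.gapSetoid_coe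
    have hcross := h.isLiftedLam.sameGap_of_crossing (fun _ hx => hx)
      (hgap.1 (hrel n a ha b hb)) (hgap.1 (hrel n' a' ha' b' hb')) haa' ha'b hbb' hb'a
    exact disjoint_left.1 (hdisj hne)
      ((hsat n).mem_of_rel ha ((hsat n').subset ha') (hgap.2 hcross)) ha'

theorem exists_ne_image_iterate_eq (hd : 2 ≤ d) {L : Set Circle1} (hL : IsUnlClass r L)
    (hinf : L.Infinite) : ∃ n n', n ≠ n' ∧ (md d)^[n] '' L = (md d)^[n'] '' L := by
  obtain ⟨θ, hθ, rfl⟩ := hL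
  obtain ⟨E, hE, hmap⟩ := h.exists_isAlmostClassMap (two_pos.trans_le hd)
  have hmem : ∀ {x}, x ∈ {x | UnlRel r θ x} ↔ θ ∉ ratC ∧ x ∉ ratC ∧ gapSetoid (liftRel r) θ x :=
    h.unlRel_iff
  set L := {x | UnlRel r θ x}
  have hsat : IsSaturatedIn (gapSetoid (liftRel r)) ratCᶜ L :=
    ⟨fun x hx => (hmem.1 hx).2.1, fun hx hv hxv =>
      hmem.2 ⟨hθ, hv, (gapSetoid _).trans (hmem.1 hx).2.2 hxv⟩⟩
  have hrel : ∀ x ∈ L, ∀ y ∈ L, gapSetoid (liftRel r) x y := fun x hx y hy =>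
    (gapSetoid _).trans ((gapSetoid _).symm (hmem.1 hx).2.2) (hmem.1 hy).2.2
  by_contra! hne
  have hrel' : ∀ n, ∀ x ∈ (md d)^[n] '' L, ∀ y ∈ (md d)^[n] '' L, gapSetoid (liftRel r) x y := by
    intro n x hx y hy
    by_contra hxy
    obtain ⟨k, k', hkk', heq⟩ := hmap.exists_ne_image_iterate_eq_of_not_rel hE hsat hrel hx hy hxy
    exact hne k k' hkk' heq
  have hwander := h.isWandering_iterate_image (hmap.iterate_image_isSaturatedIn hsat) hrel'
    (hmap.pairwise_disjoint_image_iterate hsat hrel' hne)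
  have hfin := hwander.finite_zero hd
  rw [iterate_zero, image_id] at hfin
  exact hinf hfin

end IsInvUnlinkedRel

theorem infinite_unlinked_class_eventually_periodic_general {d : ℕ} (hd : 2 ≤ d)
    {r : Circle1 → Circle1 → Prop} (hr : IsInvUnlinkedRel d r) {L : Set Circle1}
    (hL : IsUnlClass r L) (hinf : L.Infinite) :
    ∃ n, 0 < n ∧ ∃ ℓ, (md d)^[n + ℓ] '' L = (md d)^[ℓ] '' L := by
  obtain ⟨n, n', hne, heq⟩ := hr.exists_ne_image_iterate_eq hd hL hinf
  wlog hlt : n' < n generalizing n n'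
  · exact this n' n hne.symm heq.symm (by lia)
  exact ⟨n - n', Nat.sub_pos_of_lt hlt, n', by rwa [Nat.sub_add_cancel hlt.le]⟩

/-- Every infinite `λ`-unlinked class of a `d`-invariant rational
lamination is eventually periodic under `m_d`. -/
theorem infinite_unlinked_class_eventually_periodic (d : ℕ) (hd : 2 ≤ d)
    (lam : InvRatLam d) (L : Set Circle1) (hL : IsUnlClass lam.rel L)
    (hinf : L.Infinite) :
    ∃ n, 0 < n ∧ ∃ ℓ, (md d)^[n + ℓ] '' L = (md d)^[ℓ] '' L :=
  infinite_unlinked_class_eventually_periodic_general hd lam.isInvUnlinkedRel hL hinf
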